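/- arXiv:2011.09024 — 7 statements merged into one kernel-verified Lean document; each statement's English description precedes it below -/
import Mathlib

section
/- Let d ≥ 2 be an integer for which there exists a positive integer s such that 2^d - 1 divides sd - 1, and let s = s(d) be the smallest such positive integer. Then there exist a constant c > 0 and a threshold N such that for every n ≥ N there is a d-uniform hypergraph on n vertices containing no copy of K_{2,...,2}^{(d)} with at least c · n^{d - (d - 1/s)/(2^d - 1)} edges. In other words, ex_d(n, K_{2,...,2}^{(d)}) = Ω(n^{d - (d-1/s)/(2^d-1)}). -/
/-!
The construction is that of Conlon, Pohoata and Zakharov (*Random multilinear maps and the Erdős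
box problem*). Let `T` be a uniformly random multilinear form on `V ^ d`, where `V = F_q ^ r`, and
take as edges of a `d`-partite hypergraph the tuples `v` with `T v = 1`; about `|V| ^ d / q` are
expected.

If all corners of a box `(a, b)` are edges, then each pair `a j, b j` is linearly independent: two
points of the affine hyperplane `T (a_1, …, ·, …, a_d) = 1` cannot be proportional. The `2 ^ d`
corner values of `T` are therefore independent, and at most `|V| ^ (2 d) / q ^ (2 ^ d)` boxes are
expected. Moreover `T` is affine in each variable, hence equal to `1` on the product of the lines
through `a j` and `b j`, so that sliding the points `b j` along these lines gives `(q - 1) ^ d`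
boxes with the same corner `a`. Deleting one corner of every box thus removes about
`|V| ^ (2 d) / q ^ (2 ^ d + d)` edges, which is of smaller order than `|V| ^ d / q` as soon as
`r d ≤ 2 ^ d + d - 2`.

For `r = ⌈(2 ^ d - 1) / d⌉` this leaves order `n ^ (d - 1 / r)` edges on `n ≈ d |V|` vertices, and
Bertrand's postulate supplies a suitable prime `q` for every `n`. If `s d - 1 = k (2 ^ d - 1)`, then
the exponent of Gunderson, Rödl and Sidorenko is `d - k / s`, and `s ≤ k r`.
-/

/-- A `d`-uniform hypergraph with edge set `E` on vertex set `Fin n` contains a copy of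
`K_{2,…,2}^{(d)}`: there are `2d` distinct vertices `a_1, b_1, …, a_d, b_d` such that all
`2^d` sets `{c_1, …, c_d}` with `c_j ∈ {a_j, b_j}` are edges. -/
def HasBox (d n : ℕ) (E : Finset (Finset (Fin n))) : Prop :=
  ∃ a b : Fin d → Fin n,
    Function.Injective (fun p : Fin d × Bool => if p.2 then b p.1 else a p.1) ∧
    ∀ ε : Fin d → Bool,
      (Finset.image (fun j => if ε j then b j else a j) Finset.univ) ∈ E

open Finset Function
open scoped BigOperators

theorem linearIndependent_of_affineIndependent_of_apply_eq {ι R M : Type*} [Ring R]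
    [NoZeroDivisors R] [AddCommGroup M] [Module R M] {p : ι → M} (hp : AffineIndependent R p)
    (φ : M →ₗ[R] R) {c : R} (hc : c ≠ 0) (hφ : ∀ i, φ (p i) = c) : LinearIndependent R p := by
  rw [linearIndependent_iff']
  intro s w hw
  refine affineIndependent_iff.1 hp s w ?_ hw
  have hsum : (∑ i ∈ s, w i) * c = 0 := by
    simpa [map_sum, hφ, sum_mul] using congrArg φ hw
  exact (mul_eq_zero.1 hsum).resolve_right hc

theorem affineIndependent_of_injective_bool (K : Type*) {V P : Type*} [DivisionRing K]
    [AddCommGroup V] [Module K V] [AddTorsor V P] {p : Bool → P} (hp : Injective p) :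
    AffineIndependent K p := by
  have hne : p false ≠ p true := hp.ne Bool.false_ne_true
  have h : p ∘ finTwoEquiv = ![p false, p true] := by ext i; fin_cases i <;> rfl
  exact (affineIndependent_equiv finTwoEquiv).1 (h ▸ affineIndependent_of_ne K hne)

theorem multilinearMap_eq_of_mem_affineSpan {ι R N : Type*} {M : ι → Type*} [Finite ι] [CommRing R]
    [∀ j, AddCommGroup (M j)] [∀ j, Module R (M j)] [AddCommGroup N] [Module R N]
    {T : MultilinearMap R M N} {S : ∀ j, Set (M j)} {c : N}
    (hT : ∀ v, (∀ j, v j ∈ S j) → T v = c) {v : ∀ j, M j} (hv : ∀ j, v j ∈ affineSpan R (S j)) :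
    T v = c := by
  classical
  have := Fintype.ofFinite ι
  have key (u : Finset ι) : ∀ v : ∀ j, M j, (∀ j ∈ u, v j ∈ affineSpan R (S j)) →
      (∀ j ∉ u, v j ∈ S j) → T v = c := by
    induction u using Finset.induction_on with
    | empty => exact fun v _ hv ↦ hT v fun j ↦ hv j (notMem_empty j)
    | insert i u hi ih =>
      intro v hspan hS
      have hle : affineSpan R (S i) ≤
          (AffineSubspace.mk' c ⊥).comap (T.toLinearMap v i).toAffineMap := by
        refine affineSpan_le.2 fun x hx ↦ ?_
        suffices T (update v i x) = c by simpa [AffineSubspace.mem_mk', sub_eq_zero] using this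
        refine ih _ (fun j hj ↦ ?_) fun j hj ↦ ?_
        · rw [update_of_ne (ne_of_mem_of_not_mem hj hi)]
          exact hspan j (mem_insert_of_mem hj)
        · obtain rfl | hji := eq_or_ne j i
          · rwa [update_self]
          · rw [update_of_ne hji]
            exact hS j (by simp [hji, hj])
      simpa [AffineSubspace.mem_mk', sub_eq_zero] using hle (hspan i (mem_insert_self i u))
  exact key univ v (fun j _ ↦ hv j) fun j hj ↦ absurd (mem_univ j) hj

theorem exists_multilinearMap_apply_eq {ι κ K V : Type*} [Finite ι] [Finite κ] [Field K]
    [AddCommGroup V] [Module K V] {x : ι → κ → V} (hx : ∀ j, LinearIndependent K (x j))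
    (y : (ι → κ) → K) :
    ∃ T : MultilinearMap K (fun _ : ι ↦ V) K, ∀ g : ι → κ, T (fun j ↦ x j (g j)) = y g := by
  classical
  have := Fintype.ofFinite ι
  have := Fintype.ofFinite κ
  have hdual (j : ι) : ∃ π : V →ₗ[K] κ → K, ∀ k, π (x j k) = Pi.single k 1 := by
    obtain ⟨π, hπ⟩ := (Fintype.linearCombination K (x j)).exists_leftInverse_of_injective
      (LinearMap.ker_eq_bot.2
        (linearIndependent_iff_injective_fintypeLinearCombination.1 (hx j)))
    refine ⟨π, fun k ↦ ?_⟩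
    simpa using LinearMap.congr_fun hπ (Pi.single k 1)
  choose π hπ using hdual
  let δ (g : ι → κ) : MultilinearMap K (fun _ : ι ↦ V) K :=
    (MultilinearMap.mkPiAlgebra K ι K).compLinearMap fun j ↦ LinearMap.proj (g j) ∘ₗ π j
  have hδ (g g' : ι → κ) : δ g (fun j ↦ x j (g' j)) = if g = g' then 1 else 0 := by
    simp [δ, hπ, Pi.single_apply, prod_ite_zero, funext_iff]
  exact ⟨∑ g, y g • δ g, fun g' ↦ by simp [hδ]⟩

theorem dens_addMonoidHom_fiber {A B : Type*} [AddGroup A] [AddGroup B] [Fintype A]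
    [Fintype B] [DecidableEq B] {g : A →+ B} (hg : Surjective g) (y : B) :
    ({x | g x = y} : Finset A).dens = (Fintype.card B : ℚ≥0)⁻¹ := by
  have hfiber (z : B) : #{x | g x = z} = #{x | g x = y} :=
    AddMonoidHom.card_fiber_eq_of_mem_range g (hg z) (hg y)
  have hcard : Fintype.card A = Fintype.card B * #{x | g x = y} := by
    rw [← card_univ, card_eq_sum_card_fiberwise fun x _ ↦ mem_coe.2 (mem_univ (g x))]
    simp [hfiber]
  have hA : (Fintype.card A : ℚ≥0) ≠ 0 := Nat.cast_ne_zero.2 Fintype.card_ne_zero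
  rw [dens, hcard]
  rw [hcard] at hA
  push_cast at hA ⊢
  field_simp [right_ne_zero_of_mul hA]

theorem expect_card_filter {Ω X : Type*} [Fintype Ω] [Fintype X] (p : Ω → X → Prop)
    [∀ ω x, Decidable (p ω x)] :
    𝔼 ω, (#{x | p ω x} : ℝ) = ∑ x, (({ω | p ω x} : Finset Ω).dens : ℝ) := by
  have h (ω : Ω) : (#{x | p ω x} : ℝ) = ∑ x, if p ω x then 1 else 0 := by simp
  simp_rw [h, expect_sum_comm, Fintype.expect_eq_sum_div_card]
  simp [dens]

/-- Scalar-valued multilinear maps in variables indexed by `ι`, all ranging over `V`; they form the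
sample space of the random construction. -/
abbrev MultilinearForm (F ι V : Type*) [Field F] [AddCommGroup V] [Module F V] :=
  MultilinearMap F (fun _ : ι ↦ V) F

/-- The `ι`-partite hypergraph with all parts equal to `α`, encoded by its set `G` of tuples,
contains no copy of `K_{2,…,2}` whose `j`-th pair of vertices lies in the `j`-th part. -/
def IsBoxFree {ι α : Type*} (G : Finset (ι → α)) : Prop :=
  ∀ x : ι → Bool → α, (∀ j, Injective (x j)) → ∃ ε : ι → Bool, (fun j ↦ x j (ε j)) ∉ G

namespace MultilinearForm

variable {F ι V : Type*} [Field F] [Fintype ι] [AddCommGroup V] [Module F V] [Fintype V]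

open scoped Classical in
/-- The edges of the `ι`-partite hypergraph attached to `T`: the tuples on which `T` is `1`. Any
nonzero value would do, but `0` would not force the pairs of a box to be independent. -/
noncomputable def edges (T : MultilinearForm F ι V) : Finset (ι → V) := {v | T v = 1}

open scoped Classical in
/-- The copies of `K_{2,…,2}` among the edges of `T`. The two vertices of a box `x` in part `j` are
`x j false` and `x j true`, and boxes that differ by swapping them are counted separately. -/
noncomputable def boxes (T : MultilinearForm F ι V) : Finset (ι → Bool → V) :=
  {x | (∀ j, Injective (x j)) ∧ ∀ ε : ι → Bool, T (fun j ↦ x j (ε j)) = 1}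

open scoped Classical in
/-- The edges deleted from the hypergraph of `T`: those that are the `false` corner of a box. -/
noncomputable def boxedEdges (T : MultilinearForm F ι V) : Finset (ι → V) :=
  T.boxes.image fun x j ↦ x j false

/-- The box obtained from `x` by keeping the vertices `x j false` and moving each `x j true` along
the line through the two, to the point with parameter `t j`. -/
def slideBox (x : ι → Bool → V) (t : ι → F) : ι → Bool → V :=
  fun j e ↦ if e then AffineMap.lineMap (x j false) (x j true) (t j) else x j false

variable {T : MultilinearForm F ι V} {x : ι → Bool → V}

theorem mem_edges {v : ι → V} : v ∈ T.edges ↔ T v = 1 := by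
  simp [edges]

theorem mem_boxedEdges {v : ι → V} :
    v ∈ T.boxedEdges ↔ ∃ x ∈ T.boxes, (fun j ↦ x j false) = v := by
  simp [boxedEdges]

theorem mem_boxes :
    x ∈ T.boxes ↔ (∀ j, Injective (x j)) ∧ ∀ ε : ι → Bool, T (fun j ↦ x j (ε j)) = 1 := by
  simp [boxes]

theorem linearIndependent_of_mem_boxes (hx : x ∈ T.boxes) (j : ι) :
    LinearIndependent F (x j) := by
  classical
  obtain ⟨hinj, hT⟩ := mem_boxes.1 hx
  refine linearIndependent_of_affineIndependent_of_apply_eq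
    (affineIndependent_of_injective_bool F (hinj j))
    (T.toLinearMap (fun i ↦ x i false) j) one_ne_zero fun e ↦ ?_
  rw [MultilinearMap.toLinearMap_apply, ← hT (update (fun _ ↦ false) j e)]
  congr 1
  ext i
  obtain rfl | hij := eq_or_ne i j <;> simp [*]

theorem eq_one_of_mem_lines (hx : x ∈ T.boxes) {v : ι → V}
    (hv : ∀ j, v j ∈ line[F, x j false, x j true]) : T v = 1 := by
  refine multilinearMap_eq_of_mem_affineSpan (S := fun j ↦ {x j false, x j true})
    (fun w hw ↦ ?_) hv
  have hcorner (j : ι) : ∃ e, x j e = w j := by simpa [eq_comm] using hw j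
  choose ε hε using hcorner
  simpa [hε] using (mem_boxes.1 hx).2 ε

theorem slideBox_mem_boxes (hx : x ∈ T.boxes) (t : ι → Fˣ) :
    slideBox x (fun j ↦ (t j : F)) ∈ T.boxes := by
  refine mem_boxes.2 ⟨fun j ↦ ?_, fun ε ↦ eq_one_of_mem_lines hx fun j ↦ ?_⟩
  · have hne : x j false ≠ x j true := ((mem_boxes.1 hx).1 j).ne Bool.false_ne_true
    have hslide : x j false ≠ AffineMap.lineMap (x j false) (x j true) (t j : F) := fun h ↦
      (AffineMap.lineMap_eq_left_iff.1 h.symm).elim hne (t j).ne_zero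
    simpa [Injective, slideBox, eq_comm] using hslide
  · cases h : ε j
    · simpa [slideBox, h] using left_mem_affineSpan_pair F (x j false) (x j true)
    · simpa [slideBox, h] using AffineMap.lineMap_mem_affineSpan_pair (t j : F) _ _

theorem isBoxFree_edges_sdiff_boxedEdges [DecidableEq (ι → V)] (T : MultilinearForm F ι V) :
    IsBoxFree (T.edges \ T.boxedEdges) := by
  intro x hx
  by_contra! h
  have hbox : x ∈ T.boxes := mem_boxes.2 ⟨hx, fun ε ↦ mem_edges.1 (mem_sdiff.1 (h ε)).1⟩
  exact (mem_sdiff.1 (h fun _ ↦ false)).2 (mem_boxedEdges.2 ⟨x, hbox, rfl⟩)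

variable [Fintype F]

theorem card_boxedEdges_mul_le (T : MultilinearForm F ι V) :
    (Fintype.card F - 1) ^ Fintype.card ι * #T.boxedEdges ≤ #T.boxes := by
  classical
  refine mul_card_image_le_card _ _ fun v hv ↦ ?_
  obtain ⟨x, hx, rfl⟩ := mem_image.1 hv
  have hcard : #(univ : Finset (ι → Fˣ)) = (Fintype.card F - 1) ^ Fintype.card ι := by
    simp [Fintype.card_units]
  rw [← hcard]
  refine card_le_card_of_injOn (fun t ↦ slideBox x fun j ↦ (t j : F)) (fun t _ ↦ ?_)
    (fun t _ u _ htu ↦ ?_)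
  · exact mem_filter.2 ⟨slideBox_mem_boxes hx t, rfl⟩
  · ext j
    have hne : x j false ≠ x j true := ((mem_boxes.1 hx).1 j).ne Bool.false_ne_true
    exact AffineMap.lineMap_injective F hne (congrFun₂ htu j true)

noncomputable instance : Fintype (MultilinearForm F ι V) :=
  @Fintype.ofFinite _ (DFunLike.finite _)

open scoped Classical in
theorem dens_eval_eq {κ : Type*} [Fintype κ] {x : ι → κ → V}
    (hx : ∀ j, LinearIndependent F (x j)) (y : (ι → κ) → F) :
    ({T | ∀ g : ι → κ, T (fun j ↦ x j (g j)) = y g} : Finset (MultilinearForm F ι V)).dens =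
      ((Fintype.card F : ℚ≥0) ^ Fintype.card κ ^ Fintype.card ι)⁻¹ := by
  let eval : MultilinearForm F ι V →+ (ι → κ) → F :=
    { toFun T g := T fun j ↦ x j (g j)
      map_zero' := rfl
      map_add' _ _ := rfl }
  have heval : Surjective eval := fun z ↦ (exists_multilinearMap_apply_eq hx z).imp fun _ ↦ funext
  simpa [eval, funext_iff] using dens_addMonoidHom_fiber heval y

theorem le_expect_card_edges :
    ((Fintype.card V : ℝ) - 1) ^ Fintype.card ι / Fintype.card F ≤
      𝔼 T : MultilinearForm F ι V, (#T.edges : ℝ) := by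
  classical
  have hdens {v : ι → V} (hv : ∀ j, v j ≠ 0) :
      ({T | T v = 1} : Finset (MultilinearForm F ι V)).dens = (Fintype.card F : ℚ≥0)⁻¹ := by
    have h := dens_eval_eq (F := F) (κ := Unit) (x := fun j _ ↦ v j)
      (fun j ↦ linearIndependent_unique_iff.2 (hv j)) 1
    rw [Fintype.card_unit, one_pow, pow_one] at h
    rw [← h]
    congr 1
    ext T
    simp
  calc ((Fintype.card V : ℝ) - 1) ^ Fintype.card ι / Fintype.card F
      = ∑ v ∈ Fintype.piFinset fun _ : ι ↦ ({0}ᶜ : Finset V),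
          (({T | T v = 1} : Finset (MultilinearForm F ι V)).dens : ℝ) := by
        rw [sum_congr rfl fun v hv ↦ by rw [hdens (by simpa using hv)]]
        simp [Fintype.card_piFinset, card_compl, Nat.cast_sub Fintype.card_pos, div_eq_mul_inv]
    _ ≤ ∑ v, (({T | T v = 1} : Finset (MultilinearForm F ι V)).dens : ℝ) :=
        sum_le_sum_of_subset_of_nonneg (subset_univ _) fun _ _ _ ↦ NNRat.cast_nonneg _
    _ = 𝔼 T : MultilinearForm F ι V, (#T.edges : ℝ) := by
        unfold edges
        convert (expect_card_filter fun (T : MultilinearForm F ι V) v ↦ T v = 1).symm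

theorem expect_card_boxes_le :
    𝔼 T : MultilinearForm F ι V, (#T.boxes : ℝ) ≤
      (Fintype.card V : ℝ) ^ (2 * Fintype.card ι) /
        (Fintype.card F : ℝ) ^ 2 ^ Fintype.card ι := by
  classical
  have hdens (x : ι → Bool → V) : ({T | x ∈ T.boxes} : Finset (MultilinearForm F ι V)).dens ≤
      ((Fintype.card F : ℚ≥0) ^ 2 ^ Fintype.card ι)⁻¹ := by
    by_cases hx : ∀ j, LinearIndependent F (x j)
    · rw [← Fintype.card_bool, ← dens_eval_eq hx 1]
      exact dens_le_dens fun T hT ↦ by simpa using (mem_boxes.1 (by simpa using hT)).2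
    · have hempty : ({T | x ∈ T.boxes} : Finset (MultilinearForm F ι V)) = ∅ :=
        filter_eq_empty_iff.2 fun T _ hT ↦ hx (linearIndependent_of_mem_boxes hT)
      simp [hempty]
  calc 𝔼 T : MultilinearForm F ι V, (#T.boxes : ℝ)
      = ∑ x, (({T | x ∈ T.boxes} : Finset (MultilinearForm F ι V)).dens : ℝ) := by
        rw [← expect_card_filter fun (T : MultilinearForm F ι V) x ↦ x ∈ T.boxes]
        simp
    _ ≤ ∑ _x : ι → Bool → V, ((((Fintype.card F : ℚ≥0) ^ 2 ^ Fintype.card ι)⁻¹ : ℚ≥0) : ℝ) :=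
        sum_le_sum fun x _ ↦ NNRat.cast_le.2 (hdens x)
    _ = _ := by simp [pow_mul, div_eq_mul_inv]

end MultilinearForm

theorem exists_isBoxFree (F ι V : Type*) [Field F] [Fintype F] [Fintype ι]
    [AddCommGroup V] [Module F V] [Fintype V] :
    ∃ G : Finset (ι → V), IsBoxFree G ∧
      ((Fintype.card V : ℝ) - 1) ^ Fintype.card ι / Fintype.card F -
        (Fintype.card V : ℝ) ^ (2 * Fintype.card ι) /
          ((Fintype.card F : ℝ) ^ 2 ^ Fintype.card ι * ((Fintype.card F : ℝ) - 1) ^ Fintype.card ι)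
        ≤ #G := by
  classical
  set q : ℝ := (Fintype.card F : ℝ)
  have hq : 0 < (q - 1) ^ Fintype.card ι :=
    pow_pos (sub_pos.2 (Nat.one_lt_cast.2 Fintype.one_lt_card)) _
  have hexpect : (Fintype.card V - 1) ^ Fintype.card ι / q -
      (Fintype.card V : ℝ) ^ (2 * Fintype.card ι) /
        (q ^ 2 ^ Fintype.card ι * (q - 1) ^ Fintype.card ι) ≤
      𝔼 T : MultilinearForm F ι V, ((#T.edges : ℝ) - #T.boxes / (q - 1) ^ Fintype.card ι) := by
    rw [expect_sub_distrib, ← expect_div, ← div_div]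
    gcongr
    exacts [MultilinearForm.le_expect_card_edges, MultilinearForm.expect_card_boxes_le]
  obtain ⟨T, -, hT⟩ := exists_le_of_le_expect univ_nonempty hexpect
  refine ⟨T.edges \ T.boxedEdges, T.isBoxFree_edges_sdiff_boxedEdges, hT.trans ?_⟩
  have hboxed : (#T.boxedEdges : ℝ) ≤ #T.boxes / (q - 1) ^ Fintype.card ι := by
    rw [le_div_iff₀' hq, ← Nat.cast_one, ← Nat.cast_sub Fintype.card_pos]
    exact_mod_cast T.card_boxedEdges_mul_le
  have hsdiff : (#T.edges : ℝ) ≤ #(T.edges \ T.boxedEdges) + #T.boxedEdges := by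
    exact_mod_cast tsub_le_iff_right.1 (le_card_sdiff T.boxedEdges T.edges)
  linarith

theorem pow_div_two_pow_mul_le_sub {d : ℕ} {q Q : ℝ} (hq : 2 * 4 ^ d ≤ q) (hQ : 2 ≤ Q)
    (hQq : Q ^ d * q ^ 2 ≤ q ^ (2 ^ d + d)) :
    Q ^ d / (2 ^ (d + 1) * q) ≤
      (Q - 1) ^ d / q - Q ^ (2 * d) / (q ^ 2 ^ d * (q - 1) ^ d) := by
  have hq2 : 2 ≤ q := by
    have : (1 : ℝ) ≤ 4 ^ d := one_le_pow₀ (by norm_num)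
    linarith
  have hmain : Q ^ d / (2 ^ d * q) ≤ (Q - 1) ^ d / q := by
    rw [← div_div, ← div_pow]
    gcongr
    linarith
  have herror : Q ^ (2 * d) / (q ^ 2 ^ d * (q - 1) ^ d) ≤ Q ^ d / (2 ^ (d + 1) * q) :=
    calc Q ^ (2 * d) / (q ^ 2 ^ d * (q - 1) ^ d)
        ≤ Q ^ (2 * d) / (q ^ 2 ^ d * (q / 2) ^ d) := by gcongr; linarith
      _ = 2 ^ d * Q ^ d * Q ^ d / q ^ (2 ^ d + d) := by rw [div_pow, pow_add]; field_simp; ring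
      _ ≤ 2 ^ d * Q ^ d * Q ^ d / (Q ^ d * q ^ 2) := by gcongr
      _ = 2 ^ d * Q ^ d / (q * q) := by field_simp
      _ ≤ 2 ^ d * Q ^ d / (2 * 4 ^ d * q) := by gcongr
      _ = Q ^ d / (2 ^ (d + 1) * q) := by
        rw [show (4 : ℝ) = 2 * 2 by norm_num, mul_pow]; field_simp; ring
  have hhalf : Q ^ d / (2 ^ d * q) = 2 * (Q ^ d / (2 ^ (d + 1) * q)) := by field_simp; ring
  linarith

theorem exists_isBoxFree_of_card_le (F ι V : Type*) [Field F] [Fintype F] [Fintype ι]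
    [AddCommGroup V] [Module F V] [Fintype V] [Nontrivial V]
    (hF : 2 * 4 ^ Fintype.card ι ≤ Fintype.card F)
    (hV : Fintype.card V ^ Fintype.card ι * Fintype.card F ^ 2 ≤
      Fintype.card F ^ (2 ^ Fintype.card ι + Fintype.card ι)) :
    ∃ G : Finset (ι → V), IsBoxFree G ∧
      (Fintype.card V : ℝ) ^ Fintype.card ι / (2 ^ (Fintype.card ι + 1) * Fintype.card F) ≤ #G := by
  obtain ⟨G, hG, hle⟩ := exists_isBoxFree F ι V
  refine ⟨G, hG, le_trans ?_ hle⟩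
  exact pow_div_two_pow_mul_le_sub (mod_cast hF) (mod_cast Fintype.one_lt_card) (mod_cast hV)

theorem eq_of_forall_injective_selection {ι : Type*} [Finite ι] {P : ι → Bool → ι}
    (hP : ∀ ε : ι → Bool, Injective fun j ↦ P j (ε j)) (j : ι) : P j false = P j true := by
  classical
  obtain ⟨i, hi⟩ := (Finite.injective_iff_surjective.1 (hP fun _ ↦ false)) (P j true)
  suffices i = j from this ▸ hi
  by_contra hij
  exact hij (hP (update (fun _ ↦ false) j true) (by simpa [hij] using hi))

section Transversal

variable {ι α W : Type*} [Fintype ι]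

/-- The vertex set of the edge `v` of an `ι`-partite hypergraph, once `φ` has placed the disjoint
copies `{j} × α` of the parts into a common vertex set `W`. -/
def transversal (φ : ι × α ↪ W) (v : ι → α) : Finset W :=
  univ.map (.trans ⟨fun j ↦ (j, v j), fun _ _ h ↦ congrArg Prod.fst h⟩ φ)

variable (φ : ι × α ↪ W)

theorem mem_transversal {v : ι → α} {w : W} : w ∈ transversal φ v ↔ ∃ j, φ (j, v j) = w := by
  simp only [transversal, mem_map, mem_univ, true_and]
  rfl

theorem apply_mem_transversal {v : ι → α} {j : ι} {y : α} :
    φ (j, y) ∈ transversal φ v ↔ v j = y := by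
  simp [mem_transversal]

theorem card_transversal (v : ι → α) : #(transversal φ v) = Fintype.card ι := by
  simp [transversal]

theorem transversal_injective : Injective (transversal φ) := fun v w h ↦ funext fun j ↦ by
  rw [eq_comm, ← apply_mem_transversal φ, ← h, apply_mem_transversal]

variable {φ} [DecidableEq W]

theorem exists_perm_eq_of_transversal_eq_image {w : ι → Bool → W} {v : (ι → Bool) → ι → α}
    (hw : Injective (uncurry w))
    (hv : ∀ ε, transversal φ (v ε) = univ.image fun j ↦ w j (ε j)) :
    ∃ (σ : ι ≃ ι) (x : ι → Bool → α), ∀ j e, w j e = φ (σ j, x j e) := by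
  have hmem (ε : ι → Bool) (j : ι) : w j (ε j) ∈ transversal φ (v ε) := by simp [hv]
  have hφ (j : ι) (e : Bool) : ∃ p, φ p = w j e := by
    obtain ⟨i, hi⟩ := (mem_transversal φ).1 (hmem (fun _ ↦ e) j)
    exact ⟨_, hi⟩
  choose p hp using hφ
  have hvp (ε : ι → Bool) (j : ι) : v ε (p j (ε j)).1 = (p j (ε j)).2 := by
    rw [← apply_mem_transversal φ, hp]
    exact hmem ε j
  -- An edge meets every part once, so its vertices lie in distinct parts.
  have hpart (ε : ι → Bool) : Injective fun j ↦ (p j (ε j)).1 := by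
    intro i j hij
    have hpij : p i (ε i) = p j (ε j) :=
      Prod.ext hij (by rw [← hvp, ← hvp]; exact congrArg (v ε) hij)
    exact congrArg Prod.fst (@hw (i, ε i) (j, ε j) (by simp [uncurry, ← hp, hpij]))
  refine ⟨.ofBijective _ (Finite.injective_iff_bijective.1 (hpart fun _ ↦ false)),
    fun j e ↦ (p j e).2, fun j e ↦ ?_⟩
  rw [← hp, Equiv.ofBijective_apply]
  cases e
  · rfl
  · have hj : (p j false).1 = (p j true).1 :=
      eq_of_forall_injective_selection (P := fun j e ↦ (p j e).1) hpart j
    exact congrArg (fun i ↦ φ (i, (p j true).2)) hj.symm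

theorem IsBoxFree.exists_image_notMem_map_transversal {G : Finset (ι → α)} (hG : IsBoxFree G)
    {w : ι → Bool → W} (hw : Injective (uncurry w)) :
    ∃ ε : ι → Bool, (univ.image fun j ↦ w j (ε j)) ∉ G.map ⟨_, transversal_injective φ⟩ := by
  by_contra! h
  choose v hvG hv using fun ε ↦ mem_map.1 (h ε)
  obtain ⟨σ, x, hx⟩ := exists_perm_eq_of_transversal_eq_image hw hv
  obtain ⟨ε, hε⟩ := hG (fun i ↦ x (σ.symm i)) fun i e e' he ↦
    congrArg Prod.snd (@hw (σ.symm i, e) (σ.symm i, e') (by simp [uncurry, hx, he]))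
  refine hε ?_
  convert hvG (ε ∘ σ) with i
  rw [eq_comm, ← apply_mem_transversal φ]
  have : w (σ.symm i) ((ε ∘ σ) (σ.symm i)) ∈ transversal φ (v (ε ∘ σ)) := by
    rw [show transversal φ _ = _ from hv _]
    exact mem_image_of_mem _ (mem_univ _)
  simpa [hx] using this

end Transversal

theorem exists_hypergraph_of_isBoxFree {d n : ℕ} {α : Type*} [Fintype α]
    (hn : d * Fintype.card α ≤ n) {G : Finset (Fin d → α)} (hG : IsBoxFree G) :
    ∃ E : Finset (Finset (Fin n)), (∀ e ∈ E, #e = d) ∧ ¬ HasBox d n E ∧ #E = #G := by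
  obtain ⟨φ⟩ : Nonempty (Fin d × α ↪ Fin n) :=
    Function.Embedding.nonempty_of_card_le (by simpa using hn)
  refine ⟨G.map ⟨_, transversal_injective φ⟩, fun e he ↦ ?_, ?_, card_map _⟩
  · obtain ⟨v, -, rfl⟩ := mem_map.1 he
    exact (card_transversal φ v).trans (Fintype.card_fin d)
  · rintro ⟨a, b, hinj, hbox⟩
    obtain ⟨ε, hε⟩ := hG.exists_image_notMem_map_transversal (φ := φ)
      (w := fun j e ↦ if e then b j else a j) hinj
    exact hε (hbox ε)

theorem exists_prime_pow_le {K r p₀ n : ℕ} (hK : 0 < K) (hr : r ≠ 0) (hp₀ : p₀.Prime)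
    (hn : K * p₀ ^ r ≤ n) :
    ∃ p : ℕ, p.Prime ∧ p₀ ≤ p ∧ K * p ^ r ≤ n ∧ n ≤ K * 2 ^ r * p ^ r := by
  let P (p : ℕ) : Prop := p.Prime ∧ K * p ^ r ≤ n
  have hle {p : ℕ} (hp : K * p ^ r ≤ n) : p ≤ n :=
    (Nat.le_self_pow hr p).trans ((Nat.le_mul_of_pos_left _ hK).trans hp)
  set p := Nat.findGreatest P n
  obtain ⟨hp, hpn⟩ : P p := Nat.findGreatest_spec (hle hn) ⟨hp₀, hn⟩
  refine ⟨p, hp, Nat.le_findGreatest (hle hn) ⟨hp₀, hn⟩, hpn, ?_⟩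
  obtain ⟨p', hp', hlt, hp'le⟩ := Nat.exists_prime_lt_and_le_two_mul p hp.ne_zero
  have hn' : n < K * p' ^ r := by
    by_contra! h
    exact hlt.not_ge (Nat.le_findGreatest (hle h) ⟨hp', h⟩)
  calc n ≤ K * p' ^ r := hn'.le
    _ ≤ K * (2 * p) ^ r := by gcongr
    _ = K * 2 ^ r * p ^ r := by ring

/-- The asymptotic bound `ex_d(n, K_{2,…,2}^{(d)}) = Ω(n ^ α)`. -/
def BoxFreeLowerBound (d : ℕ) (α : ℝ) : Prop :=
  ∃ c : ℝ, 0 < c ∧ ∃ N : ℕ, ∀ n : ℕ, N ≤ n →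
    ∃ E : Finset (Finset (Fin n)),
      (∀ e ∈ E, #e = d) ∧ ¬ HasBox d n E ∧ c * (n : ℝ) ^ α ≤ #E

theorem BoxFreeLowerBound.mono {d : ℕ} {α β : ℝ} (h : BoxFreeLowerBound d β) (hαβ : α ≤ β) :
    BoxFreeLowerBound d α := by
  obtain ⟨c, hc, N, hN⟩ := h
  refine ⟨c, hc, max N 1, fun n hn ↦ ?_⟩
  obtain ⟨E, hcard, hbox, hE⟩ := hN n (le_of_max_le_left hn)
  have hn1 : (1 : ℝ) ≤ n := mod_cast le_of_max_le_right hn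
  exact ⟨E, hcard, hbox, (by gcongr : c * (n : ℝ) ^ α ≤ c * (n : ℝ) ^ β).trans hE⟩

theorem pow_rpow_sub_one_div {x : ℝ} (hx : 0 < x) {r : ℕ} (hr : r ≠ 0) (d : ℕ) :
    (x ^ r) ^ ((d : ℝ) - 1 / r) = (x ^ r) ^ d / x := by
  rw [Real.rpow_sub (pow_pos hx r), Real.rpow_natCast, one_div, Real.pow_rpow_inv_natCast hx.le hr]

theorem ceilDiv_mul_lt {a : ℕ} (ha : 0 < a) (b : ℕ) : b ⌈/⌉ a * a < b + a := by
  rw [Nat.ceilDiv_eq_add_pred_div]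
  exact (Nat.div_mul_le_self _ a).trans_lt (by omega)

theorem ceilDiv_ne_zero {a b : ℕ} (ha : 0 < a) (hb : b ≠ 0) : b ⌈/⌉ a ≠ 0 := fun h ↦
  hb (by simpa [h] using le_smul_ceilDiv (b := b) ha)

theorem exponent_le_of_dvd {d s : ℕ} (hd : 2 ≤ d) (hs : 0 < s) (hdvd : (2 ^ d - 1) ∣ (s * d - 1)) :
    (d : ℝ) - ((d : ℝ) - 1 / s) / ((2 : ℝ) ^ d - 1) ≤
      (d : ℝ) - 1 / ((2 ^ d - 1) ⌈/⌉ d : ℕ) := by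
  have hd₀ : 0 < d := by omega
  have h2 : 1 < 2 ^ d := Nat.one_lt_two_pow hd₀.ne'
  have hr : (2 ^ d - 1) ⌈/⌉ d ≠ 0 := ceilDiv_ne_zero hd₀ (by omega)
  have hrd : 2 ^ d - 1 ≤ d * ((2 ^ d - 1) ⌈/⌉ d) := (ceilDiv_le_iff_le_mul hd₀).1 le_rfl
  set r := (2 ^ d - 1) ⌈/⌉ d
  obtain ⟨k, hk⟩ := hdvd
  have hsd : s * d = (2 ^ d - 1) * k + 1 := by
    have : 0 < s * d := by positivity
    omega
  have hskr : s ≤ k * r := by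
    refine Nat.le_of_lt_succ (Nat.lt_of_mul_lt_mul_right (a := d) ?_)
    calc s * d = (2 ^ d - 1) * k + 1 := hsd
      _ ≤ d * r * k + 1 := by gcongr
      _ < (k * r + 1) * d := by linarith
  have hsdR : (s : ℝ) * d = ((2 : ℝ) ^ d - 1) * k + 1 := by
    have := congrArg (Nat.cast (R := ℝ)) hsd
    push_cast [Nat.cast_sub h2.le] at this
    exact this
  have hpow : (0 : ℝ) < 2 ^ d - 1 := sub_pos.2 (mod_cast h2)
  have hs' : (0 : ℝ) < s := mod_cast hs
  have hks : ((d : ℝ) - 1 / s) / ((2 : ℝ) ^ d - 1) = k / s := by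
    field_simp
    linarith
  have hkr : (1 : ℝ) / r ≤ k / s := by
    rw [div_le_div_iff₀ (by positivity) hs', one_mul]
    exact_mod_cast hskr
  rw [hks]
  linarith

theorem exists_hypergraph_of_prime {d n p r : ℕ} (hp : p.Prime) (hr : r ≠ 0) (hdp : 2 * 4 ^ d ≤ p)
    (hrd : r * d + 2 ≤ 2 ^ d + d) (hn : d * p ^ r ≤ n) :
    ∃ E : Finset (Finset (Fin n)), (∀ e ∈ E, #e = d) ∧ ¬ HasBox d n E ∧
      ((p : ℝ) ^ r) ^ d / (2 ^ (d + 1) * p) ≤ #E := by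
  have : Fact p.Prime := ⟨hp⟩
  have : Nonempty (Fin r) := Fin.pos_iff_nonempty.1 (Nat.pos_of_ne_zero hr)
  have hcard : Fintype.card (Fin r → ZMod p) = p ^ r := by simp [ZMod.card]
  have hpow : (p ^ r) ^ d * p ^ 2 ≤ p ^ (2 ^ d + d) := by
    rw [← pow_mul, ← pow_add]
    exact Nat.pow_le_pow_right hp.pos hrd
  obtain ⟨G, hG, hGcard⟩ := exists_isBoxFree_of_card_le (ZMod p) (Fin d) (Fin r → ZMod p)
    (by simpa [ZMod.card] using hdp) (by simpa [ZMod.card] using hpow)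
  obtain ⟨E, hunif, hbox, hEG⟩ := exists_hypergraph_of_isBoxFree (hcard ▸ hn) hG
  exact ⟨E, hunif, hbox, by simpa [ZMod.card, hEG] using hGcard⟩

theorem GRS_lower_bound_general {d : ℕ} (hd : 0 < d) :
    BoxFreeLowerBound d ((d : ℝ) - 1 / ((2 ^ d - 1) ⌈/⌉ d : ℕ)) := by
  have h2 : 1 < 2 ^ d := Nat.one_lt_two_pow hd.ne'
  have hr : (2 ^ d - 1) ⌈/⌉ d ≠ 0 := ceilDiv_ne_zero hd (by omega)
  have hrd : (2 ^ d - 1) ⌈/⌉ d * d < 2 ^ d - 1 + d := ceilDiv_mul_lt hd _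
  set r := (2 ^ d - 1) ⌈/⌉ d
  set α : ℝ := d - 1 / r
  have hα : 0 ≤ α := sub_nonneg.2 <| by
    rw [one_div]
    exact (Nat.cast_inv_le_one r).trans (mod_cast hd)
  obtain ⟨p₀, hdp₀, hp₀⟩ := Nat.exists_infinite_primes (2 * 4 ^ d)
  refine ⟨(2 ^ (d + 1) * ((d * 2 ^ r : ℕ) : ℝ) ^ α)⁻¹, by positivity, d * p₀ ^ r, fun n hn ↦ ?_⟩
  obtain ⟨p, hp, hp₀p, hpn, hnp⟩ := exists_prime_pow_le hd hr hp₀ hn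
  obtain ⟨E, hunif, hbox, hE⟩ :=
    exists_hypergraph_of_prime hp hr (hdp₀.trans hp₀p) (by omega) hpn
  refine ⟨E, hunif, hbox, le_trans ?_ hE⟩
  have hp' : (0 : ℝ) < p := mod_cast hp.pos
  have hnα : (n : ℝ) ^ α ≤ ((d * 2 ^ r : ℕ) : ℝ) ^ α * (((p : ℝ) ^ r) ^ d / p) :=
    calc (n : ℝ) ^ α ≤ ((d * 2 ^ r : ℕ) * (p : ℝ) ^ r) ^ α := by gcongr; exact_mod_cast hnp
      _ = _ := by rw [Real.mul_rpow (by positivity) (by positivity), pow_rpow_sub_one_div hp' hr]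
  rw [inv_mul_le_iff₀ (by positivity)]
  exact hnα.trans_eq (by field_simp)

/-- Theorem 1 (Gunderson–Rödl–Sidorenko): if `d ≥ 2` and `s` is the smallest positive
integer such that `2^d - 1` divides `sd - 1`, then
`ex_d(n, K_{2,…,2}^{(d)}) = Ω(n^{d - (d - 1/s)/(2^d - 1)})`. -/
theorem GRS_lower_bound (d s : ℕ) (hd : 2 ≤ d) (hs : 0 < s)
    (hdvd : (2 ^ d - 1) ∣ (s * d - 1))
    (hmin : ∀ s' : ℕ, 0 < s' → (2 ^ d - 1) ∣ (s' * d - 1) → s ≤ s') :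
    ∃ c : ℝ, 0 < c ∧ ∃ N : ℕ, ∀ n : ℕ, N ≤ n →
      ∃ E : Finset (Finset (Fin n)),
        (∀ e ∈ E, e.card = d) ∧ ¬ HasBox d n E ∧
        c * (n : ℝ) ^ ((d : ℝ) - ((d : ℝ) - 1 / (s : ℝ)) / ((2 : ℝ) ^ d - 1)) ≤ (E.card : ℝ) := by
  exact (GRS_lower_bound_general (by omega)).mono (exponent_le_of_dvd hd hs hdvd)
end

section
/- For any integer d ≥ 2, there exists a constant C > 0 such that for every positive integer n, every d-uniform hypergraph on n vertices containing no copy of K_{2,...,2}^{(d)} has at most C · n^{d - 1/2^{d-1}} edges. In other words, ex_d(n, K_{2,...,2}^{(d)}) = O(n^{d - 1/2^{d-1}}). -/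
open Finset

universe u

section CauchySchwarz

@[to_additive]
lemma prod_pi_fin_succ {M : Type*} [CommMonoid M] {k : ℕ} {V : Fin (k + 1) → Type*}
    [∀ i, Fintype (V i)] (F : (∀ i, V i) → M) :
    ∏ x, F x = ∏ v, ∏ y, F (Fin.cons v y) := by
  rw [← Fintype.prod_prod_type']
  exact ((Fin.consEquiv V).prod_comp F).symm

variable {R : Type*} [CommSemiring R] {k : ℕ}

/-- The (unnormalised) box form of `f`, doubled in every coordinate of the tuple but not in `W`: a
family `c` gives the two vertices `c i false` and `c i true` in the `i`-th coordinate. For a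
`0/1`-valued `f` it counts ordered copies of `K_{2,…,2,1}`, degenerate ones included. -/
def boxSum {V : Fin k → Type*} [∀ i, Fintype (V i)] {W : Type*} [Fintype W]
    (f : (∀ i, V i) → W → R) : R :=
  ∑ c : ∀ i, Bool → V i, ∑ w, ∏ ε : Fin k → Bool, f (fun i => c i (ε i)) w

/-- The function obtained from `f` by doubling its first coordinate; the resulting pair becomes part
of the undoubled argument, so that `boxSum` can be computed one coordinate at a time. -/
def doubleFirst {V : Fin (k + 1) → Type*} {W : Type*} (f : (∀ i, V i) → W → R) :
    (∀ i : Fin k, V i.succ) → (Bool → V 0) × W → R :=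
  fun y q => ∏ t, f (Fin.cons (q.1 t) y) q.2

lemma boxSum_doubleFirst {V : Fin (k + 1) → Type*} [∀ i, Fintype (V i)] {W : Type*}
    [Fintype W] (f : (∀ i, V i) → W → R) : boxSum (doubleFirst f) = boxSum f := by
  have choice_cons (p : Bool → V 0) (c : ∀ i : Fin k, Bool → V i.succ) (t : Bool)
      (ε : Fin k → Bool) :
      (fun i => (Fin.cons p c : ∀ i, Bool → V i) i ((Fin.cons t ε : Fin (k + 1) → Bool) i)) =
        (Fin.cons (p t) fun i => c i (ε i) : ∀ i, V i) := by
    funext i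
    cases i using Fin.cases <;> rfl
  calc boxSum (doubleFirst f)
    _ = ∑ p : Bool → V 0, ∑ c : ∀ i : Fin k, Bool → V i.succ, ∑ w, ∏ t, ∏ ε : Fin k → Bool,
          f (Fin.cons (p t) fun i => c i (ε i)) w := by
        simp only [boxSum, doubleFirst, Fintype.sum_prod_type]
        rw [sum_comm]
        simp only [prod_comm (s := univ (α := Bool))]
    _ = boxSum f := by
        simp only [boxSum, sum_pi_fin_succ, prod_pi_fin_succ, choice_cons]

lemma sq_sum_eq_sum_prod_bool {β : Type*} [Fintype β] (g : β → R) :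
    (∑ v, g v) ^ 2 = ∑ p : Bool → β, ∏ t, g (p t) := by
  rw [← Fintype.prod_sum, prod_const, card_univ, Fintype.card_bool]

variable [LinearOrder R] [IsStrictOrderedRing R] [ExistsAddOfLE R]

lemma sq_sum_le_card_mul_sum_doubleFirst {V : Fin (k + 1) → Type*} [∀ i, Fintype (V i)]
    {W : Type*} [Fintype W] (f : (∀ i, V i) → W → R) :
    (∑ x, ∑ w, f x w) ^ 2 ≤
      (Fintype.card (∀ i : Fin k, V i.succ) * Fintype.card W) * ∑ y, ∑ q, doubleFirst f y q :=
  calc (∑ x, ∑ w, f x w) ^ 2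
    _ = (∑ z : (∀ i : Fin k, V i.succ) × W, ∑ v, f (Fin.cons v z.1) z.2) ^ 2 := by
        simp only [sum_pi_fin_succ, Fintype.sum_prod_type, sum_comm (s := univ (α := V 0))]
    _ ≤ Fintype.card ((∀ i : Fin k, V i.succ) × W) *
          ∑ z : (∀ i : Fin k, V i.succ) × W, (∑ v, f (Fin.cons v z.1) z.2) ^ 2 :=
        sq_sum_le_card_mul_sum_sq
    _ = (Fintype.card (∀ i : Fin k, V i.succ) * Fintype.card W) *
          ∑ y, ∑ q, doubleFirst f y q := by
        simp only [Fintype.card_prod, Nat.cast_mul, sq_sum_eq_sum_prod_bool, doubleFirst,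
          Fintype.sum_prod_type, sum_comm (s := univ (α := Bool → V 0))]

theorem card_sq_mul_sum_pow_le_boxSum {V : Fin k → Type u} [∀ i, Fintype (V i)] {W : Type u}
    [Fintype W] (f : (∀ i, V i) → W → R) :
    (Fintype.card (∀ i, V i) : R) ^ 2 * Fintype.card W * (∑ x, ∑ w, f x w) ^ 2 ^ k ≤
      (Fintype.card (∀ i, V i) * Fintype.card W : R) ^ 2 ^ k * boxSum f := by
  induction k generalizing W with
  | zero =>
    simp [boxSum, Subsingleton.elim _ (default : ∀ i, V i)]
  | succ k ih =>
    have h_card : (Fintype.card (∀ i, V i) : R) =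
        Fintype.card (V 0) * Fintype.card (∀ i : Fin k, V i.succ) := by
      rw [Fintype.card_congr (Fin.consEquiv V).symm, Fintype.card_prod, Nat.cast_mul]
    have h_ih := ih (doubleFirst f)
    have h_cs := sq_sum_le_card_mul_sum_doubleFirst f
    simp only [boxSum_doubleFirst, Fintype.card_prod, Fintype.card_fun, Fintype.card_bool,
      Nat.cast_mul, Nat.cast_pow] at h_ih
    rw [h_card]
    set n : R := (Fintype.card (V 0) : R)
    set m : R := (Fintype.card (∀ i : Fin k, V i.succ) : R)
    set l : R := (Fintype.card W : R)
    set S := ∑ x, ∑ w, f x w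
    set S' := ∑ y, ∑ q, doubleFirst f y q
    calc (n * m) ^ 2 * l * S ^ 2 ^ (k + 1)
      _ = (n * m) ^ 2 * l * (S ^ 2) ^ 2 ^ k := by rw [← pow_mul, pow_succ' 2 k]
      _ ≤ (n * m) ^ 2 * l * (m * l * S') ^ 2 ^ k := by
          gcongr
          exact sq_nonneg S
      _ = (m * l) ^ 2 ^ k * (m ^ 2 * (n ^ 2 * l) * S' ^ 2 ^ k) := by
          rw [mul_pow (m * l) S']; ring
      _ ≤ (m * l) ^ 2 ^ k * ((m * (n ^ 2 * l)) ^ 2 ^ k * boxSum f) := by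
          gcongr
      _ = (n * m * l) ^ 2 ^ (k + 1) * boxSum f := by
          rw [← mul_assoc, ← mul_pow, pow_succ' 2 k, pow_mul (n * m * l)]
          ring_nf

end CauchySchwarz

section DegenerateFamilies

variable {ι β V : Type*} [Fintype ι] [DecidableEq ι]

lemma card_mul_card_filter_apply_mem [Fintype β] [DecidableEq β] (i : ι) (s : Finset β) :
    Fintype.card β * #{c : ι → β | c i ∈ s} = #s * Fintype.card β ^ Fintype.card ι := by
  have h_pi : #{c : ι → β | c i ∈ s} = #s * Fintype.card β ^ (Fintype.card ι - 1) := by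
    rw [← Fintype.piFinset_univ,
      ← Fintype.piFinset_update_eq_filter_piFinset_mem _ _ (subset_univ s),
      Fintype.card_piFinset, ← mul_prod_erase _ _ (mem_univ i), Function.update_self,
      prod_congr rfl fun j hj => by rw [Function.update_of_ne (ne_of_mem_erase hj)], prod_const,
      card_erase_of_mem (mem_univ i), card_univ, card_univ]
  have : Nonempty ι := ⟨i⟩
  rw [h_pi, mul_left_comm, mul_pow_sub_one Fintype.card_ne_zero]

variable [Fintype V]

lemma card_mul_card_filter_apply_false_eq_apply_true [DecidableEq V] (i : ι) :
    Fintype.card V * #{c : ι → Bool → V | c i false = c i true} =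
      (Fintype.card V ^ 2) ^ Fintype.card ι := by
  have h_diag (p : Bool → V) : p false = p true ↔ p ∈ univ.piDiag Bool := by
    simp only [mem_piDiag, mem_univ, true_and, funext_iff, Bool.forall_bool, Function.const_apply]
    exact ⟨fun h => ⟨p true, h.symm, rfl⟩, fun ⟨_, hf, ht⟩ => hf.symm.trans ht⟩
  rcases isEmpty_or_nonempty V with hV | hV
  · have : Nonempty ι := ⟨i⟩
    simp
  have h := card_mul_card_filter_apply_mem (β := Bool → V) i (univ.piDiag Bool)
  simp only [← h_diag, card_piDiag, card_univ, Fintype.card_fun, Fintype.card_bool, sq,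
    mul_assoc] at h
  simpa only [sq] using Nat.eq_of_mul_eq_mul_left Fintype.card_pos h

lemma sum_le_of_le_one_of_forall_ne (D : (ι → Bool → V) → ℕ) (hD : ∀ c, D c ≤ Fintype.card V)
    (hD_one : ∀ c, (∀ i, c i false ≠ c i true) → D c ≤ 1) :
    ∑ c, D c ≤ (Fintype.card ι + 1) * (Fintype.card V ^ 2) ^ Fintype.card ι := by
  have := Classical.decEq V
  have hD_le (c : ι → Bool → V) :
      D c ≤ 1 + ∑ i, if c i false = c i true then Fintype.card V else 0 := by
    by_cases hc : ∀ i, c i false ≠ c i true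
    · exact le_add_right (hD_one c hc)
    · push Not at hc
      obtain ⟨i, hi⟩ := hc
      calc D c
        _ ≤ if c i false = c i true then Fintype.card V else 0 := by
          simpa only [if_pos hi] using hD c
        _ ≤ ∑ i, if c i false = c i true then Fintype.card V else 0 :=
          single_le_sum_of_canonicallyOrdered
            (f := fun i => if c i false = c i true then Fintype.card V else 0) (mem_univ i)
        _ ≤ 1 + ∑ i, if c i false = c i true then Fintype.card V else 0 := Nat.le_add_left _ _
  calc ∑ c, D c
    _ ≤ ∑ c : ι → Bool → V, (1 + ∑ i, if c i false = c i true then Fintype.card V else 0) :=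
        sum_le_sum fun c _ => hD_le c
    _ = Fintype.card (ι → Bool → V) +
          ∑ i, Fintype.card V * #{c : ι → Bool → V | c i false = c i true} := by
        rw [sum_add_distrib, sum_comm]
        simp only [sum_const, ← sum_filter, card_univ, smul_eq_mul, one_mul, mul_comm]
    _ = (Fintype.card ι + 1) * (Fintype.card V ^ 2) ^ Fintype.card ι := by
        simp only [card_mul_card_filter_apply_false_eq_apply_true, Fintype.card_fun,
          Fintype.card_bool, sum_const, card_univ, smul_eq_mul]
        ring

end DegenerateFamilies

lemma injective_uncurry_of_forall_injective {ι τ α : Type*} {c : ι → τ → α}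
    (hc : ∀ i, Function.Injective (c i))
    (h_choice : ∀ ε : ι → τ, Function.Injective fun i => c i (ε i)) :
    Function.Injective (Function.uncurry c) := by
  classical
  rintro ⟨i, s⟩ ⟨j, t⟩ h
  have hij : i = j := by
    by_contra hij
    -- Entries at different coordinates occur together in a common choice.
    apply hij
    apply h_choice (Function.update (fun _ => t) i s)
    simpa [Function.update_of_ne (Ne.symm hij)] using h
  subst hij
  exact congrArg (Prod.mk i) (hc i h)

lemma hasBox_of_forall_image_mem {d n : ℕ} {E : Finset (Finset (Fin n))} (hE : ∀ e ∈ E, #e = d)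
    {c : Fin d → Bool → Fin n} (hc : ∀ i, c i false ≠ c i true)
    (h_mem : ∀ ε : Fin d → Bool, (univ.image fun i => c i (ε i)) ∈ E) : HasBox d n E := by
  have h_ite (i : Fin d) (t : Bool) : (if t then c i true else c i false) = c i t := by
    cases t <;> rfl
  refine ⟨fun i => c i false, fun i => c i true, ?_, ?_⟩
  · simp only [h_ite]
    refine injective_uncurry_of_forall_injective (fun i => Bool.injective_iff.2 (hc i)) fun ε => ?_
    rw [← Set.injOn_univ, ← coe_univ, ← card_image_iff, hE _ (h_mem ε), card_fin]
  · simpa only [h_ite] using h_mem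

section CommonExtensions

variable {V : Type*} [Fintype V] [DecidableEq V] {k : ℕ}

/-- The indicator that the entries of `x` together with `v` form an edge of `E`; the tuple form of
the edge set, to which the Cauchy–Schwarz inequality is applied. -/
def edgeIndicator (E : Finset (Finset V)) (x : Fin k → V) (v : V) : ℕ :=
  if insert v (univ.image x) ∈ E then 1 else 0

/-- The common extensions of the pairs `{c i false, c i true}`: the vertices that complete every
choice of one vertex from each pair to an edge of `E`. -/
def commonExtensions (E : Finset (Finset V)) (c : Fin k → Bool → V) : Finset V :=
  {v | ∀ ε : Fin k → Bool, insert v (univ.image fun i => c i (ε i)) ∈ E}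

lemma boxSum_edgeIndicator (E : Finset (Finset V)) :
    boxSum (k := k) (edgeIndicator E) = ∑ c : Fin k → Bool → V, #(commonExtensions E c) := by
  simp only [boxSum, edgeIndicator, commonExtensions, prod_ite_zero, prod_const_one, mem_univ,
    true_implies, card_filter]

lemma card_le_sum_edgeIndicator {E : Finset (Finset V)} (hE : ∀ e ∈ E, #e = k + 1) :
    #E ≤ ∑ x : Fin k → V, ∑ v, edgeIndicator E x v := by
  have h_surj : E ⊆ image (fun z : (Fin k → V) × V => insert z.2 (univ.image z.1))
      {z | insert z.2 (univ.image z.1) ∈ E} := by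
    intro e he
    obtain ⟨v, s, -, rfl, hs⟩ := card_eq_succ.1 (hE e he)
    have h_image : univ.image (fun i => ((s.equivFinOfCardEq hs).symm i : V)) = s := by
      ext w
      simp [(s.equivFinOfCardEq hs).symm.exists_congr_left]
    exact mem_image.2 ⟨(fun i => (s.equivFinOfCardEq hs).symm i, v), by simpa [h_image] using he,
      by simp only [h_image]⟩
  calc #E
    _ ≤ #{z : (Fin k → V) × V | insert z.2 (univ.image z.1) ∈ E} :=
        (card_le_card h_surj).trans card_image_le
    _ = ∑ x : Fin k → V, ∑ v, edgeIndicator E x v := by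
        simp only [card_filter, Fintype.sum_prod_type, edgeIndicator]

lemma card_commonExtensions_le_one {n : ℕ} {E : Finset (Finset (Fin n))}
    (hE : ∀ e ∈ E, #e = k + 1) (h_box : ¬ HasBox (k + 1) n E) {c : Fin k → Bool → Fin n}
    (hc : ∀ i, c i false ≠ c i true) : #(commonExtensions E c) ≤ 1 := by
  refine card_le_one.2 fun u hu v hv => ?_
  by_contra huv
  simp only [commonExtensions, mem_filter, mem_univ, true_and] at hu hv
  refine h_box <| hasBox_of_forall_image_mem hE
    (c := Fin.cons (fun t => if t then v else u) c) (Fin.cases (by simpa) (by simpa)) fun ε => ?_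
  rw [Fin.univ_succ, cons_eq_insert, image_insert, map_eq_image, image_image, Fin.cons_zero]
  split_ifs
  · exact hv _
  · exact hu _

lemma mul_card_pow_le_of_not_hasBox {n : ℕ} (hn : 0 < n) {E : Finset (Finset (Fin n))}
    (hE : ∀ e ∈ E, #e = k + 1) (h_box : ¬ HasBox (k + 1) n E) :
    n * #E ^ 2 ^ k ≤ (k + 1) * (n ^ (k + 1)) ^ 2 ^ k := by
  have h_extensions := sum_le_of_le_one_of_forall_ne (fun c => #(commonExtensions (k := k) E c))
    (fun c => card_le_univ _) (fun c hc => card_commonExtensions_le_one hE h_box hc)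
  have h_cs := card_sq_mul_sum_pow_le_boxSum (k := k) (edgeIndicator E)
  simp only [Fintype.card_fin, boxSum_edgeIndicator, Fintype.card_fun, Nat.cast_id]
    at h_extensions h_cs
  refine le_of_mul_le_mul_left (a := (n ^ k) ^ 2) ?_ (by positivity)
  calc (n ^ k) ^ 2 * (n * #E ^ 2 ^ k)
    _ = (n ^ k) ^ 2 * n * #E ^ 2 ^ k := by ring
    _ ≤ (n ^ k) ^ 2 * n * (∑ x : Fin k → Fin n, ∑ v, edgeIndicator E x v) ^ 2 ^ k := by
        gcongr
        exact card_le_sum_edgeIndicator hE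
    _ ≤ (n ^ k * n) ^ 2 ^ k * ∑ c : Fin k → Bool → Fin n, #(commonExtensions E c) := h_cs
    _ ≤ (n ^ k * n) ^ 2 ^ k * ((k + 1) * (n ^ 2) ^ k) := by gcongr
    _ = (n ^ k) ^ 2 * ((k + 1) * (n ^ (k + 1)) ^ 2 ^ k) := by ring

end CommonExtensions

lemma le_mul_rpow_of_mul_pow_le {x y K s : ℝ} {m : ℕ} (hm : m ≠ 0) (hy : 0 < y) (hK : 1 ≤ K)
    (h : y * x ^ m ≤ K * (y ^ s) ^ m) : x ≤ K * y ^ (s - 1 / m) := by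
  have h_root : y * (y ^ (s - 1 / m)) ^ m = (y ^ s) ^ m := by
    rw [Real.rpow_sub hy, div_pow, one_div, Real.rpow_inv_natCast_pow hy.le hm,
      mul_div_cancel₀ _ hy.ne']
  refine le_of_pow_le_pow_left₀ hm (by positivity) (le_of_mul_le_mul_left ?_ hy)
  calc y * x ^ m
    _ ≤ K * (y ^ s) ^ m := h
    _ ≤ K ^ m * (y ^ s) ^ m := by gcongr; exact le_self_pow₀ hK hm
    _ = y * (K * y ^ (s - 1 / m)) ^ m := by rw [mul_pow, mul_left_comm, h_root]

/-- Erdős's upper bound: for any `d ≥ 2`,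
`ex_d(n, K_{2,…,2}^{(d)}) = O(n^{d - 1/2^{d-1}})`. -/
theorem box_problem_upper_bound (d : ℕ) (hd : 2 ≤ d) :
    ∃ C : ℝ, 0 < C ∧ ∀ n : ℕ, 0 < n →
      ∀ E : Finset (Finset (Fin n)),
        (∀ e ∈ E, e.card = d) → ¬ HasBox d n E →
        (E.card : ℝ) ≤ C * (n : ℝ) ^ ((d : ℝ) - 1 / (2 : ℝ) ^ (d - 1)) := by
  obtain ⟨k, rfl⟩ : ∃ k, d = k + 1 := ⟨d - 1, by omega⟩
  refine ⟨(k + 1 : ℕ), by positivity, fun n hn E hE h_box => ?_⟩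
  have h_count : (n : ℝ) * #E ^ 2 ^ k ≤ (k + 1 : ℕ) * ((n : ℝ) ^ ((k + 1 : ℕ) : ℝ)) ^ 2 ^ k := by
    rw [Real.rpow_natCast]
    exact_mod_cast mul_card_pow_le_of_not_hasBox hn hE h_box
  simpa using le_mul_rpow_of_mul_pow_le (by positivity) (by positivity) (by simp) h_count
end

section
/- For any integer d ≥ 2, there exist a constant c > 0 and a threshold N such that for every n ≥ N there is a d-uniform hypergraph on n vertices containing no copy of K_{2,...,2}^{(d)} with at least c · n^{d - d/(2^d - 1)} edges. In other words, ex_d(n, K_{2,...,2}^{(d)}) = Ω(n^{d - d/(2^d-1)}). -/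
open Finset Filter MeasureTheory ProbabilityTheory
open scoped unitInterval

section Deletion

variable {α : Type*}

lemma setBernoulli_real_setOf_subset {S : Finset α} {u : Set α} (hS : ↑S ⊆ u) (p : I) :
    (setBernoulli u p).real {t | ↑S ⊆ t} = (p : ℝ) ^ #S := by
  have hpi : (fun f : α → Prop ↦ {i | f i}) ⁻¹' {t | ↑S ⊆ t} = Set.pi S fun _ ↦ {True} := by
    ext f
    simp [Set.subset_def]
  rw [measureReal_def, setBernoulli_apply', hpi,
    Measure.infinitePi_pi _ fun _ _ ↦ measurableSet_singleton _, ENNReal.toReal_prod, ← prod_const]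
  refine prod_congr rfl fun i hi ↦ ?_
  simp [hS hi]

lemma measurableSet_setOf_subset (S : Finset α) : MeasurableSet {t : Set α | ↑S ⊆ t} := by
  have hInter : {t : Set α | ↑S ⊆ t} = ⋂ x ∈ S, {t | x ∈ t} := by
    ext t
    simp [Set.subset_def]
  rw [hInter]
  exact S.measurableSet_biInter fun x _ ↦ measurableSet_mem x

open Classical in
lemma integrable_card_filter_subset {ι : Type*} (T : Finset ι) (S : ι → Finset α)
    (μ : Measure (Set α)) [IsFiniteMeasure μ] :
    Integrable (fun t : Set α ↦ (#{i ∈ T | ↑(S i) ⊆ t} : ℝ)) μ := by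
  simp_rw [natCast_card_filter]
  refine integrable_finsetSum _ fun i _ ↦ ?_
  exact (integrable_const (1 : ℝ)).indicator (measurableSet_setOf_subset (S i))

open Classical in
lemma integral_card_filter_subset {ι : Type*} (T : Finset ι) (S : ι → Finset α) (p : I) :
    ∫ t : Set α, (#{i ∈ T | ↑(S i) ⊆ t} : ℝ) ∂setBernoulli Set.univ p =
      ∑ i ∈ T, (p : ℝ) ^ #(S i) := by
  simp_rw [natCast_card_filter]
  rw [integral_finsetSum]
  · refine sum_congr rfl fun i _ ↦ ?_
    rw [← setBernoulli_real_setOf_subset (Set.subset_univ _)]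
    exact integral_indicator_one (measurableSet_setOf_subset (S i))
  · intro i _
    exact (integrable_const (1 : ℝ)).indicator (measurableSet_setOf_subset (S i))

open Classical in
lemma exists_set_mul_card_sub_sum_pow_le (V : Finset α) (𝓕 : Finset (Finset α)) (p : I) :
    ∃ t : Set α, (p : ℝ) * #V - ∑ S ∈ 𝓕, (p : ℝ) ^ #S ≤
      #{v ∈ V | v ∈ t} - #{S ∈ 𝓕 | ↑S ⊆ t} := by
  have hV_int := integrable_card_filter_subset V singleton (setBernoulli Set.univ p)
  have h𝓕_int := integrable_card_filter_subset 𝓕 id (setBernoulli Set.univ p)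
  obtain ⟨t, ht⟩ := exists_integral_le (hV_int.sub h𝓕_int)
  rw [integral_sub' hV_int h𝓕_int, integral_card_filter_subset, integral_card_filter_subset] at ht
  exact ⟨t, by simpa [mul_comm] using ht⟩

lemma exists_avoiding_subset_card_le_add [DecidableEq α] (X : Finset α) (𝓕 : Finset (Finset α))
    (h𝓕 : ∅ ∉ 𝓕) :
    ∃ Y ⊆ X, (∀ S ∈ 𝓕, ¬ S ⊆ Y) ∧ #X ≤ #Y + #{S ∈ 𝓕 | S ⊆ X} := by
  have hne : ∀ S ∈ 𝓕, S.Nonempty := fun S hS ↦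
    nonempty_iff_ne_empty.2 fun h ↦ h𝓕 (h ▸ hS)
  obtain rfl | ⟨S₀, hS₀⟩ := 𝓕.eq_empty_or_nonempty
  · exact ⟨X, Subset.rfl, by simp⟩
  have : Nonempty α := ⟨(hne S₀ hS₀).choose⟩
  choose! x hx using hne
  let D : Finset α := {S ∈ 𝓕 | S ⊆ X}.image x
  refine ⟨X \ D, sdiff_subset, fun S hS hSY ↦ ?_, ?_⟩
  · exact (mem_sdiff.1 (hSY (hx S hS))).2 <|
      mem_image_of_mem x (mem_filter.2 ⟨hS, hSY.trans sdiff_subset⟩)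
  · calc #X ≤ #(X \ D) + #D := tsub_le_iff_right.1 (le_card_sdiff D X)
      _ ≤ _ := by gcongr; exact card_image_le

lemma exists_avoiding_subset_mul_card_sub_le (V : Finset α) (𝓕 : Finset (Finset α))
    (h𝓕 : ∅ ∉ 𝓕) (p : I) :
    ∃ Y ⊆ V, (∀ S ∈ 𝓕, ¬ S ⊆ Y) ∧ (p : ℝ) * #V - ∑ S ∈ 𝓕, (p : ℝ) ^ #S ≤ #Y := by
  classical
  obtain ⟨t, ht⟩ := exists_set_mul_card_sub_sum_pow_le V 𝓕 p
  obtain ⟨Y, hYV, hY, hcard⟩ := exists_avoiding_subset_card_le_add {v ∈ V | v ∈ t} 𝓕 h𝓕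
  refine ⟨Y, hYV.trans (filter_subset _ _), hY, ?_⟩
  have hsub : #{S ∈ 𝓕 | S ⊆ ({v ∈ V | v ∈ t} : Finset α)} ≤ #{S ∈ 𝓕 | ↑S ⊆ t} :=
    card_le_card <| monotone_filter_right _ fun S _ hS v hv ↦ (mem_filter.1 (hS hv)).2
  have hcard' : (#{v ∈ V | v ∈ t} : ℝ) ≤ #Y + #{S ∈ 𝓕 | ↑S ⊆ t} := by
    exact_mod_cast hcard.trans (by gcongr)
  linarith

end Deletion

section Copies

variable {V : Type*}

/-- The hypergraph with edge set `E` contains a copy of the hypergraph with edge set `H`. Neither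
hypergraph has to be uniform, and the copy does not have to be induced. -/
def ContainsCopy {W : Type*} (H : Finset (Finset V)) (E : Finset (Finset W)) : Prop :=
  ∃ φ : V ↪ W, ∀ e ∈ H, e.map φ ∈ E

variable [Fintype V]

open Classical in
/-- The edge sets of the copies of the hypergraph `H` in the complete hypergraph on `W`. -/
noncomputable def copies (H : Finset (Finset V)) (W : Type*) [Fintype W] :
    Finset (Finset (Finset W)) :=
  univ.image fun φ : V ↪ W ↦ H.map (mapEmbedding φ).toEmbedding

variable {W : Type*} [Fintype W]

lemma containsCopy_iff_exists_mem_copies {H : Finset (Finset V)} {E : Finset (Finset W)} :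
    ContainsCopy H E ↔ ∃ F ∈ copies H W, F ⊆ E := by
  simp [ContainsCopy, copies, subset_iff]

lemma card_of_mem_copies {H : Finset (Finset V)} {F : Finset (Finset W)}
    (hF : F ∈ copies H W) : #F = #H := by
  classical
  obtain ⟨φ, -, rfl⟩ := mem_image.1 hF
  exact card_map _

lemma card_copies_le (H : Finset (Finset V)) :
    #(copies H W) ≤ Fintype.card W ^ Fintype.card V := by
  classical
  calc #(copies H W) ≤ #(univ : Finset (V ↪ W)) := card_image_le
    _ = (Fintype.card W).descFactorial (Fintype.card V) := by
      rw [card_univ, Fintype.card_embedding_eq]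
    _ ≤ _ := Nat.descFactorial_le_pow _ _

lemma exists_uniform_not_containsCopy (d : ℕ) {H : Finset (Finset V)} (hH : H.Nonempty) (p : I) :
    ∃ E : Finset (Finset W), (∀ e ∈ E, #e = d) ∧ ¬ ContainsCopy H E ∧
      (p : ℝ) * (Fintype.card W).choose d - (p : ℝ) ^ #H * (Fintype.card W : ℝ) ^ Fintype.card V
        ≤ #E := by
  have hcopies : ∅ ∉ copies H W := fun h ↦
    hH.card_pos.ne (by simpa using card_of_mem_copies h)
  obtain ⟨E, hE, hfree, hcard⟩ :=
    exists_avoiding_subset_mul_card_sub_le (powersetCard d (univ : Finset W)) _ hcopies p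
  refine ⟨E, fun e he ↦ (mem_powersetCard.1 (hE he)).2, ?_, le_trans ?_ hcard⟩
  · simpa [containsCopy_iff_exists_mem_copies] using hfree
  · have hsum : ∑ F ∈ copies H W, (p : ℝ) ^ #F ≤
        (p : ℝ) ^ #H * (Fintype.card W : ℝ) ^ Fintype.card V := by
      rw [sum_congr rfl fun F hF ↦ by rw [card_of_mem_copies hF], sum_const, nsmul_eq_mul,
        mul_comm]
      gcongr
      · exact pow_nonneg p.2.1 _
      · exact_mod_cast card_copies_le H
    rw [card_powersetCard, card_univ]
    gcongr

end Copies

lemma exists_eventually_mul_pow_le_choose (d : ℕ) :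
    ∃ c : ℝ, 0 < c ∧ c ≤ 1 ∧ ∀ᶠ n : ℕ in atTop, c * (n : ℝ) ^ d ≤ n.choose d := by
  obtain ⟨c, hc, hle⟩ := Asymptotics.isBigO_iff''.1 (isTheta_choose d).2
  refine ⟨min c 1, by positivity, min_le_right _ _, hle.mono fun n hn ↦ ?_⟩
  simp only [norm_pow, Real.norm_natCast] at hn
  exact le_trans (by gcongr; exact min_le_left _ _) hn

/-- The right-hand side is the lower bound of `exists_uniform_not_containsCopy` at density
`a * x ^ (-(v - d) / m)`, with `2 * a * x ^ d` in place of the binomial coefficient. -/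
lemma sq_mul_rpow_sub_le {a x : ℝ} {d v m : ℕ} (ha₀ : 0 ≤ a) (ha₁ : a ≤ 1) (hx : 0 < x)
    (hm : m ≠ 0) :
    a ^ 2 * x ^ ((d : ℝ) - (v - d) / m) ≤
      a * x ^ (-((v - d) / m : ℝ)) * (2 * a * x ^ d) -
        (a * x ^ (-((v - d) / m : ℝ))) ^ (m + 1) * x ^ v := by
  set y : ℝ := x ^ (-((v - d) / m : ℝ)) with hy
  have hym : y ^ m * x ^ v = x ^ d := by
    rw [hy, ← Real.rpow_mul_natCast hx.le, ← Real.rpow_natCast x v, ← Real.rpow_add hx,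
      ← Real.rpow_natCast x d]
    congr 1
    field_simp
    ring
  have ha : a ^ (m + 1) ≤ a ^ 2 := pow_le_pow_of_le_one ha₀ ha₁ (by omega)
  calc a ^ 2 * x ^ ((d : ℝ) - (v - d) / m) = 2 * a ^ 2 * (y * x ^ d) - a ^ 2 * (y * x ^ d) := by
        rw [sub_eq_add_neg, Real.rpow_add hx, Real.rpow_natCast]
        ring
    _ ≤ 2 * a ^ 2 * (y * x ^ d) - a ^ (m + 1) * (y * x ^ d) := by gcongr
    _ = a * y * (2 * a * x ^ d) - (a * y) ^ (m + 1) * x ^ v := by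
        rw [← hym]
        ring

theorem deletion_lower_bound_general {V : Type*} [Fintype V] (d : ℕ) (H : Finset (Finset V))
    (hd : d ≤ Fintype.card V) (hH : 1 < #H) :
    ∃ c : ℝ, 0 < c ∧ ∃ N : ℕ, ∀ n : ℕ, N ≤ n →
      ∃ E : Finset (Finset (Fin n)), (∀ e ∈ E, #e = d) ∧ ¬ ContainsCopy H E ∧
        c * (n : ℝ) ^ ((d : ℝ) - (Fintype.card V - d) / (#H - 1)) ≤ #E := by
  obtain ⟨m, hm⟩ : ∃ m, #H = m + 1 := Nat.exists_eq_add_one.2 (by omega)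
  obtain ⟨c, hc₀, hc₁, hchoose⟩ := exists_eventually_mul_pow_le_choose d
  obtain ⟨N, hN⟩ := eventually_atTop.1 (hchoose.and (eventually_ge_atTop 1))
  refine ⟨(c / 2) ^ 2, by positivity, N, fun n hn ↦ ?_⟩
  obtain ⟨hchoose_n, hn⟩ := hN n hn
  have hr : 0 ≤ ((Fintype.card V - d) / m : ℝ) :=
    div_nonneg (sub_nonneg.2 (by exact_mod_cast hd)) m.cast_nonneg
  let p : I := ⟨c / 2 * (n : ℝ) ^ (-((Fintype.card V - d) / m : ℝ)), by positivity,
    mul_le_one₀ (by linarith) (by positivity)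
      (Real.rpow_le_one_of_one_le_of_nonpos (by exact_mod_cast hn) (neg_nonpos.2 hr))⟩
  obtain ⟨E, hunif, hfree, hcard⟩ :=
    exists_uniform_not_containsCopy (W := Fin n) d (card_pos.1 (zero_lt_one.trans hH)) p
  refine ⟨E, hunif, hfree, le_trans ?_ hcard⟩
  calc (c / 2) ^ 2 * (n : ℝ) ^ ((d : ℝ) - (Fintype.card V - d) / (#H - 1))
      ≤ p * (2 * (c / 2) * (n : ℝ) ^ d) - (p : ℝ) ^ #H * (n : ℝ) ^ Fintype.card V := by
        rw [hm, Nat.cast_add_one, add_sub_cancel_right]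
        exact sq_mul_rpow_sub_le (by positivity) (by linarith) (by exact_mod_cast hn) (by omega)
    _ ≤ _ := by
        rw [mul_div_cancel₀ _ two_ne_zero, Fintype.card_fin]
        gcongr

/-- The edge set of `K_{2,…,2}^{(d)}`, with `(j, false)` and `(j, true)` as the vertices `a_j` and
`b_j`. -/
def boxHypergraph (d : ℕ) : Finset (Finset (Fin d × Bool)) :=
  univ.image fun ε : Fin d → Bool ↦ univ.image fun j ↦ (j, ε j)

lemma card_boxHypergraph (d : ℕ) : #(boxHypergraph d) = 2 ^ d := by
  rw [boxHypergraph, card_image_of_injective]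
  · simp
  · intro ε δ h
    funext j
    simpa [eq_comm] using (Finset.ext_iff.1 h (j, ε j)).1 (mem_image_of_mem _ (mem_univ j))

lemma hasBox_iff_containsCopy {d n : ℕ} {E : Finset (Finset (Fin n))} :
    HasBox d n E ↔ ContainsCopy (boxHypergraph d) E := by
  have himage (φ : Fin d × Bool ↪ Fin n) (ε : Fin d → Bool) :
      (univ.image fun j ↦ (j, ε j)).map φ = univ.image fun j ↦ φ (j, ε j) := by
    rw [map_eq_image, image_image]
    rfl
  simp only [ContainsCopy, boxHypergraph, forall_mem_image, mem_univ, forall_const, himage]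
  constructor
  · rintro ⟨a, b, hinj, hab⟩
    exact ⟨⟨_, hinj⟩, hab⟩
  · rintro ⟨φ, hφ⟩
    have hite (q : Fin d × Bool) : (if q.2 then φ (q.1, true) else φ (q.1, false)) = φ q := by
      obtain ⟨j, _ | _⟩ := q <;> rfl
    refine ⟨fun j ↦ φ (j, false), fun j ↦ φ (j, true), ?_, fun ε ↦ ?_⟩
    · simpa only [hite] using φ.injective
    · simpa only [hite (_, ε _)] using @hφ ε

/-- The probabilistic deletion lower bound: for any `d ≥ 2`,
`ex_d(n, K_{2,…,2}^{(d)}) = Ω(n^{d - d/(2^d - 1)})`. -/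
theorem deletion_lower_bound (d : ℕ) (hd : 2 ≤ d) :
    ∃ c : ℝ, 0 < c ∧ ∃ N : ℕ, ∀ n : ℕ, N ≤ n →
      ∃ E : Finset (Finset (Fin n)),
        (∀ e ∈ E, e.card = d) ∧ ¬ HasBox d n E ∧
        c * (n : ℝ) ^ ((d : ℝ) - (d : ℝ) / ((2 : ℝ) ^ d - 1)) ≤ (E.card : ℝ) := by
  have hH : 1 < #(boxHypergraph d) := card_boxHypergraph d ▸ Nat.one_lt_two_pow (by omega)
  simpa [hasBox_iff_containsCopy, card_boxHypergraph, mul_two] using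
    deletion_lower_bound_general d (boxHypergraph d) (by simp; omega) hH
end

section
/- Let F be a finite field with q elements, let s and d be positive integers, let V = F^s, and for each j = 1, ..., d let v_j^0, v_j^1 ∈ V be linearly independent. Then the number of multilinear functions T : V^d → F satisfying T(v_1^{ε_1}, ..., v_d^{ε_d}) = 1 for all 2^d choices of ε_1, ..., ε_d ∈ {0,1} is exactly q^{s^d - 2^d}. Equivalently, a uniformly random multilinear function T : V^d → F satisfies all 2^d of these equations with probability exactly q^{-2^d}. -/
/-!
Fix vectors `v i k ∈ M i`. Evaluating a multilinear map at all the points `(v i (p i))_i` is a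
linear map. If the families `v i` are linearly independent, they can be sent to the standard basis
vectors of free modules, where a multilinear map takes arbitrary prescribed values on tuples of
basis vectors; so evaluation is surjective. The solution sets of the equations are therefore cosets
of its kernel, whose dimension is given by rank-nullity.
-/

section Evaluation

variable {ι R N : Type*} {κ M : ι → Type*} [CommSemiring R] [∀ i, AddCommMonoid (M i)]
  [∀ i, Module R (M i)] [AddCommMonoid N] [Module R N]

/-- The linear map sending a multilinear map `T` to its values on the box of points with `i`-th
coordinate in the family `v i`. A choice `p` of indices encodes the point `(v i (p i))_i`. -/
def boxEval (v : ∀ i, κ i → M i) : MultilinearMap R M N →ₗ[R] ((∀ i, κ i) → N) where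
  toFun T p := T fun i => v i (p i)
  map_add' _ _ := rfl
  map_smul' _ _ := rfl

@[simp]
theorem boxEval_apply (v : ∀ i, κ i → M i) (T : MultilinearMap R M N) (p : ∀ i, κ i) :
    boxEval v T p = T fun i => v i (p i) :=
  rfl

theorem boxEval_surjective_of_apply_eq_single [Finite ι] {v : ∀ i, κ i → M i}
    (g : ∀ i, M i →ₗ[R] (κ i →₀ R)) (hg : ∀ i k, g i (v i k) = Finsupp.single k 1) :
    Function.Surjective (boxEval v : MultilinearMap R M N →ₗ[R] _) := by
  classical
  have := Fintype.ofFinite ι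
  intro c
  refine ⟨(MultilinearMap.fromDFinsuppEquiv κ R fun p =>
    MultilinearMap.mkPiRing R ι (c p)).compLinearMap
      fun i => (finsuppLequivDFinsupp R).toLinearMap ∘ₗ g i, ?_⟩
  ext p
  simp [hg]

end Evaluation

theorem finrank_multilinearMap {ι R N : Type*} {M : ι → Type*} [Fintype ι] [CommSemiring R]
    [StrongRankCondition R] [∀ i, AddCommMonoid (M i)] [∀ i, Module R (M i)]
    [∀ i, Module.Free R (M i)] [∀ i, Module.Finite R (M i)] [AddCommMonoid N] [Module R N]
    [Module.Free R N] [Module.Finite R N] :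
    Module.finrank R (MultilinearMap R M N) =
      (∏ i, Module.finrank R (M i)) * Module.finrank R N := by
  classical
  rw [Module.finrank_eq_card_basis (Basis.multilinearMap
    (fun i => Module.finBasis R (M i)) (Module.finBasis R N))]
  simp

theorem natCard_linearMap_fiber_of_surjective {K U W : Type*} [DivisionRing K] [AddCommGroup U]
    [Module K U] [Module.Finite K U] [AddCommGroup W] [Module K W] {f : U →ₗ[K] W}
    (hf : Function.Surjective f) (w : W) :
    Nat.card {u // f u = w} = Nat.card K ^ (Module.finrank K U - Module.finrank K W) := by
  have e : {u // f u = w} ≃ LinearMap.ker f :=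
    AddMonoidHom.fiberEquivKerOfSurjective (f := f.toAddMonoidHom) hf w
  have hrank : Module.finrank K W + Module.finrank K (LinearMap.ker f) = Module.finrank K U := by
    rw [← f.finrank_range_add_finrank_ker, LinearMap.range_eq_top.2 hf, finrank_top]
  rw [Nat.card_congr e, Module.natCard_eq_pow_finrank (K := K), ← hrank, Nat.add_sub_cancel_left]

section Field

variable {F ι W : Type*} {κ V : ι → Type*} [Field F] [∀ i, AddCommGroup (V i)]
  [∀ i, Module F (V i)] [AddCommGroup W] [Module F W]

theorem boxEval_surjective [Finite ι] {v : ∀ i, κ i → V i}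
    (hv : ∀ i, LinearIndependent F (v i)) :
    Function.Surjective (boxEval v : MultilinearMap F V W →ₗ[F] _) := by
  choose g hg using fun i => (Finsupp.linearCombination F (v i)).exists_leftInverse_of_injective
    (LinearMap.ker_eq_bot.2 (hv i))
  refine boxEval_surjective_of_apply_eq_single g fun i k => ?_
  simpa using LinearMap.congr_fun (hg i) (Finsupp.single k 1)

theorem count_multilinear_box_equations_general [Fintype F] [Fintype ι] [∀ i, Fintype (κ i)]
    [∀ i, Module.Finite F (V i)] [Module.Finite F W] {v : ∀ i, κ i → V i}
    (hv : ∀ i, LinearIndependent F (v i)) (c : (∀ i, κ i) → W) :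
    Nat.card {T : MultilinearMap F V W // ∀ p, T (fun i => v i (p i)) = c p} =
      Fintype.card F ^
        ((∏ i, Module.finrank F (V i) - ∏ i, Fintype.card (κ i)) * Module.finrank F W) := by
  classical
  have hcard := natCard_linearMap_fiber_of_surjective (boxEval_surjective (W := W) hv) c
  rw [finrank_multilinearMap, Module.finrank_pi_fintype, Finset.sum_const, Finset.card_univ,
    Fintype.card_pi, smul_eq_mul, ← Nat.sub_mul, Nat.card_eq_fintype_card (α := F)] at hcard
  simpa only [funext_iff, boxEval_apply] using hcard

end Field

/-- With `V = F^s` over a finite field `F` with `q` elements and `v_j^0, v_j^1 ∈ V`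
linearly independent for each `j`, the number of multilinear `T : V^d → F` with
`T(v_1^{ε_1}, …, v_d^{ε_d}) = 1` for all `2^d` choices of `ε_j ∈ {0,1}` is exactly
`q^(s^d - 2^d)`; equivalently, a uniformly random multilinear `T` satisfies all these
equations with probability exactly `q^{-2^d}`. -/
theorem count_multilinear_box_equations (F : Type*) [Field F] [Fintype F]
    (q s d : ℕ) (hq : Fintype.card F = q) (hs : 0 < s) (hd : 0 < d)
    (v : Fin d → Bool → (Fin s → F)) (hv : ∀ j, LinearIndependent F (v j)) :
    Nat.card {T : MultilinearMap F (fun _ : Fin d => Fin s → F) F //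
        ∀ ε : Fin d → Bool, T (fun j => v j (ε j)) = 1}
      = q ^ (s ^ d - 2 ^ d) := by
  simpa [hq] using count_multilinear_box_equations_general hv fun _ => (1 : F)
end

section
/- Let F be a finite field with q elements, let s, d, r be positive integers, and let V = F^s. Then the number of pairs ((T_1, ..., T_r), (v_1^0, v_1^1, ..., v_d^0, v_d^1)), where each T_i : V^d → F is a multilinear function and v_j^0, v_j^1 ∈ V satisfy v_j^0 ≠ v_j^1 for all j, such that T_i(v_1^{ε_1}, ..., v_d^{ε_d}) = 1 for all i = 1, ..., r and all ε_1, ..., ε_d ∈ {0,1}, is exactly (q^s - 1)^d · (q^s - q)^d · q^{r·s^d - 2^d·r}. Equivalently, if T_1, ..., T_r are independent uniformly random multilinear functions V^d → F and ℱ denotes the set of such tuples (v_1^0, v_1^1, ..., v_d^0, v_d^1), then E[|ℱ|] = (q^s - 1)^d (q^s - q)^d q^{-2^d r}. -/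
/-!
Suppose a multilinear map takes the same nonzero value at all points `(v_1^{ε_1}, …, v_d^{ε_d})`.
Fixing all arguments but the `j`-th gives a linear map with a constant nonzero value on the family
`v_j`, so the coefficients of any linear relation between the vectors of `v_j` sum to `0`. If `v_j`
is affinely independent (for a pair: if `v_j^0 ≠ v_j^1`), it is therefore linearly independent, and
there are `(q^s - 1)(q^s - q)` linearly independent pairs in `F^s`.

For linearly independent families, evaluation at the grid points is a surjective linear map:
projecting each factor onto the coordinate space of its family reduces this to standard bases, whose
tensor products form a basis. Each `T_i` therefore ranges over one fibre of a linear surjection,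
from a space of dimension `s^d` onto one of dimension `2^d`.
-/

open Module

namespace BoxCount

section Counting

theorem natCard_subtype_forall {ι : Type*} [Fintype ι] {α : ι → Type*} (P : ∀ i, α i → Prop) :
    Nat.card {a : ∀ i, α i // ∀ i, P i (a i)} = ∏ i, Nat.card {a // P i a} := by
  rw [Nat.card_congr Equiv.subtypePiEquivPi, Nat.card_pi]

theorem natCard_pairs_of_natCard_fiber {α β : Type*} [Finite α] [Finite β] {P : β → Prop}
    {Q : β → α → Prop} {m : ℕ} (hm : ∀ b, P b → Nat.card {a // Q b a} = m) :
    Nat.card {p : α × β // P p.2 ∧ Q p.2 p.1} = Nat.card {b // P b} * m := by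
  have := Fintype.ofFinite {b // P b}
  let e : {p : α × β // P p.2 ∧ Q p.2 p.1} ≃ Σ b : {b // P b}, {a // Q b a} :=
    { toFun p := ⟨⟨p.1.2, p.2.1⟩, ⟨p.1.1, p.2.2⟩⟩
      invFun x := ⟨(x.2, x.1), x.1.2, x.2.2⟩ }
  rw [Nat.card_congr e, Nat.card_sigma, Finset.sum_congr rfl fun b _ => hm b.1 b.2]
  simp

end Counting

section Linear

variable {F : Type*} [DivisionRing F]

theorem natCard_fiber_of_surjective {M N : Type*} [AddCommGroup M] [Module F M] [AddCommGroup N]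
    [Module F N] [Module.Finite F M] {f : M →ₗ[F] N} (hf : Function.Surjective f) (y : N) :
    Nat.card {x // f x = y} = Nat.card F ^ (finrank F M - finrank F N) := by
  obtain ⟨x₀, rfl⟩ := hf y
  have hker : finrank F f.ker = finrank F M - finrank F N := by
    have h := f.finrank_range_add_finrank_ker
    rw [LinearMap.range_eq_top.2 hf, finrank_top] at h
    omega
  rw [← hker, ← natCard_eq_pow_finrank]
  exact Nat.card_congr <| (Equiv.subRight x₀).subtypeEquiv fun x => by
    simp [LinearMap.mem_ker, sub_eq_zero]

theorem natCard_linearIndependent [Finite F] {V : Type*} [AddCommGroup V] [Module F V]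
    [Module.Finite F V] (κ : Type*) [Fintype κ] :
    Nat.card {v : κ → V // LinearIndependent F v} =
      ∏ k ∈ Finset.range (Fintype.card κ), (Nat.card F ^ finrank F V - Nat.card F ^ k) := by
  have := Fintype.ofFinite F
  have : Finite V := Module.finite_of_finite F
  rcases le_or_gt (Fintype.card κ) (finrank F V) with hle | hlt
  · rw [Nat.card_eq_fintype_card (α := F), Finset.prod_range, ← card_linearIndependent hle]
    exact Nat.card_congr <| ((Fintype.equivFin κ).arrowCongr (.refl V)).subtypeEquiv fun v =>
      (linearIndependent_equiv (Fintype.equivFin κ).symm).symm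
  · have : IsEmpty {v : κ → V // LinearIndependent F v} :=
      ⟨fun v => hlt.not_ge v.2.fintype_card_le_finrank⟩
    rw [Nat.card_of_isEmpty, eq_comm]
    exact Finset.prod_eq_zero (Finset.mem_range.2 hlt) (Nat.sub_self _)

theorem linearIndependent_of_affineIndependent {κ V N : Type*} [AddCommGroup V] [Module F V]
    [AddCommGroup N] [Module F N] {v : κ → V} (hv : AffineIndependent F v) (f : V →ₗ[F] N) {c : N}
    (hc : c ≠ 0) (hf : ∀ k, f (v k) = c) : LinearIndependent F v := by
  rw [linearIndependent_iff']
  intro s a ha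
  have hsum : (∑ k ∈ s, a k) • c = 0 := by
    simpa [hf, Finset.sum_smul] using congrArg f ha
  exact affineIndependent_iff.1 hv s a ((smul_eq_zero_iff_left hc).1 hsum) ha

theorem affineIndependent_bool_iff {V : Type*} [AddCommGroup V] [Module F V] {v : Bool → V} :
    AffineIndependent F v ↔ v false ≠ v true := by
  have : Unique {b // b ≠ false} := ⟨⟨⟨true, by decide⟩⟩, by decide⟩
  rw [affineIndependent_iff_linearIndependent_vsub F v false, linearIndependent_unique_iff,
    vsub_ne_zero, ← Subsingleton.elim (⟨true, by decide⟩ : {b // b ≠ false}) default, ne_comm]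

end Linear

section Multilinear

theorem finrank_multilinearMap {R ι N : Type*} {V : ι → Type*} [CommRing R] [Nontrivial R]
    [Fintype ι] [∀ j, AddCommGroup (V j)] [∀ j, Module R (V j)] [∀ j, Module.Finite R (V j)]
    [∀ j, Module.Free R (V j)] [AddCommGroup N] [Module R N] [Module.Finite R N]
    [Module.Free R N] :
    finrank R (MultilinearMap R V N) = (∏ j, finrank R (V j)) * finrank R N := by
  classical
  rw [finrank_eq_card_basis (Basis.multilinearMap (fun j => finBasis R (V j)) (finBasis R N))]
  simp

/-- Evaluation of multilinear maps at all the points of the grid whose `j`-th axis is the family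
`v j`. For `κ j = Bool` these are the `2 ^ d` points `(v_1^{ε_1}, …, v_d^{ε_d})` of a box. -/
def gridEval {R ι N : Type*} {V κ : ι → Type*} [CommSemiring R] [∀ j, AddCommMonoid (V j)]
    [∀ j, Module R (V j)] [AddCommMonoid N] [Module R N] (v : ∀ j, κ j → V j) :
    MultilinearMap R V N →ₗ[R] ((∀ j, κ j) → N) where
  toFun T ε := T fun j => v j (ε j)
  map_add' _ _ := rfl
  map_smul' _ _ := rfl

variable {F ι N : Type*} {V κ : ι → Type*} [Field F] [∀ j, AddCommGroup (V j)]
  [∀ j, Module F (V j)] [AddCommGroup N] [Module F N]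

theorem gridEval_surjective [Finite ι] {v : ∀ j, κ j → V j}
    (hv : ∀ j, LinearIndependent F (v j)) :
    Function.Surjective (gridEval v : MultilinearMap F V N →ₗ[F] _) := by
  classical
  intro c
  choose g hg using fun j => LinearMap.exists_leftInverse_of_injective
    (Finsupp.linearCombination F (v j)) (LinearMap.ker_eq_bot.2 (hv j))
  have hgv (j : ι) (k : κ j) : g j (v j k) = Finsupp.basisSingleOne k := by
    simpa using LinearMap.congr_fun (hg j) (Finsupp.single k 1)
  let b := Basis.piTensorProduct fun j => (Finsupp.basisSingleOne : Basis (κ j) F (κ j →₀ F))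
  refine ⟨((b.constr F c).compMultilinearMap (PiTensorProduct.tprod F)).compLinearMap g, ?_⟩
  funext ε
  calc
    b.constr F c (⨂ₜ[F] j, g j (v j (ε j))) = b.constr F c (b ε) := by
      simp only [hgv, b, Basis.piTensorProduct_apply]
    _ = c ε := b.constr_basis F c ε

theorem natCard_multilinearMap_eq_on_grid [Fintype ι] [∀ j, Module.Finite F (V j)]
    [Module.Finite F N] [∀ j, Fintype (κ j)] {v : ∀ j, κ j → V j}
    (hv : ∀ j, LinearIndependent F (v j)) (c : (∀ j, κ j) → N) :
    Nat.card {T : MultilinearMap F V N // ∀ ε, T (fun j => v j (ε j)) = c ε} =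
      Nat.card F ^ ((∏ j, finrank F (V j) - ∏ j, Fintype.card (κ j)) * finrank F N) := by
  classical
  have hfiber := natCard_fiber_of_surjective (gridEval_surjective (N := N) hv) c
  rw [finrank_multilinearMap, finrank_pi_fintype, Finset.sum_const, Finset.card_univ,
    Fintype.card_pi, smul_eq_mul, ← Nat.sub_mul] at hfiber
  rw [← hfiber]
  exact Nat.card_congr <| Equiv.subtypeEquivRight fun T => funext_iff.symm

theorem natCard_multilinearMap_family_eq_on_grid {ρ : Type*} [Fintype ι] [Fintype ρ]
    [∀ j, Module.Finite F (V j)] [Module.Finite F N] [∀ j, Fintype (κ j)] {v : ∀ j, κ j → V j}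
    (hv : ∀ j, LinearIndependent F (v j)) (c : ρ → (∀ j, κ j) → N) :
    Nat.card {T : ρ → MultilinearMap F V N // ∀ i ε, T i (fun j => v j (ε j)) = c i ε} =
      Nat.card F ^ (Fintype.card ρ *
        ((∏ j, finrank F (V j) - ∏ j, Fintype.card (κ j)) * finrank F N)) := by
  rw [natCard_subtype_forall fun i (T : MultilinearMap F V N) =>
    ∀ ε, T (fun j => v j (ε j)) = c i ε]
  simp only [natCard_multilinearMap_eq_on_grid hv, Finset.prod_const, Finset.card_univ, ← pow_mul,
    mul_comm]

theorem linearIndependent_of_const_on_grid [∀ j, Nonempty (κ j)] {v : ∀ j, κ j → V j}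
    (hv : ∀ j, AffineIndependent F (v j)) {T : MultilinearMap F V N} {c : N} (hc : c ≠ 0)
    (hT : ∀ ε : ∀ j, κ j, T (fun j => v j (ε j)) = c) (j : ι) : LinearIndependent F (v j) := by
  classical
  let ε : ∀ j, κ j := fun _ => Classical.arbitrary _
  refine linearIndependent_of_affineIndependent (hv j) (T.toLinearMap (fun i => v i (ε i)) j) hc
    fun k => ?_
  rw [MultilinearMap.toLinearMap_apply, ← hT (Function.update ε j k)]
  congr 1
  funext i
  exact (Function.apply_update (fun i => v i) ε j k i).symm

end Multilinear

end BoxCount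

open BoxCount

theorem count_box_pairs_general {F ι ρ N : Type*} {V κ : ι → Type*} [Field F] [Finite F]
    [Fintype ι] [Fintype ρ] [∀ j, AddCommGroup (V j)] [∀ j, Module F (V j)]
    [∀ j, Module.Finite F (V j)] [AddCommGroup N] [Module F N] [Module.Finite F N]
    [∀ j, Fintype (κ j)] [∀ j, Nonempty (κ j)] {c : ρ → N} (hc : c ≠ 0) :
    Nat.card {p : (ρ → MultilinearMap F V N) × (∀ j, κ j → V j) //
        (∀ j, AffineIndependent F (p.2 j)) ∧
        ∀ (i : ρ) (ε : ∀ j, κ j), p.1 i (fun j => p.2 j (ε j)) = c i} =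
      (∏ j, ∏ k ∈ Finset.range (Fintype.card (κ j)),
        (Nat.card F ^ finrank F (V j) - Nat.card F ^ k)) *
      Nat.card F ^ (Fintype.card ρ *
        ((∏ j, finrank F (V j) - ∏ j, Fintype.card (κ j)) * finrank F N)) := by
  obtain ⟨i₀, hi₀⟩ := Function.ne_iff.1 hc
  have (j : ι) : Finite (V j) := Module.finite_of_finite F
  have : Finite (MultilinearMap F V N) := Module.finite_of_finite F
  have hindep {T : ρ → MultilinearMap F V N} {v : ∀ j, κ j → V j}
      (hT : ∀ i (ε : ∀ j, κ j), T i (fun j => v j (ε j)) = c i) :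
      (∀ j, AffineIndependent F (v j)) ↔ ∀ j, LinearIndependent F (v j) :=
    ⟨fun hv => linearIndependent_of_const_on_grid hv hi₀ (hT i₀), fun hv j =>
      (hv j).affineIndependent⟩
  rw [Nat.card_congr (Equiv.subtypeEquivRight fun _ => and_congr_left hindep),
    natCard_pairs_of_natCard_fiber
      fun (v : ∀ j, κ j → V j) (hv : ∀ j, LinearIndependent F (v j)) =>
        natCard_multilinearMap_family_eq_on_grid hv fun i _ => c i,
    natCard_subtype_forall fun j (v : κ j → V j) => LinearIndependent F v]
  simp only [natCard_linearIndependent]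

/-- Claim 8 (expected number of ordered boxes): the number of pairs
`((T_1, …, T_r), (v_1^0, v_1^1, …, v_d^0, v_d^1))` with each `T_i : V^d → F`
multilinear, `v_j^0 ≠ v_j^1` in `V = F^s` for all `j`, and
`T_i(v_1^{ε_1}, …, v_d^{ε_d}) = 1` for all `i` and all `ε_j ∈ {0,1}`, is exactly
`(q^s - 1)^d (q^s - q)^d q^(r s^d - 2^d r)`; equivalently,
`E[|ℱ|] = (q^s - 1)^d (q^s - q)^d q^{-2^d r}`. -/
theorem count_box_pairs (F : Type*) [Field F] [Fintype F]
    (q s d r : ℕ) (hq : Fintype.card F = q) (hs : 0 < s) (hd : 0 < d) (hr : 0 < r) :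
    Nat.card {p : (Fin r → MultilinearMap F (fun _ : Fin d => Fin s → F) F)
        × (Fin d → Bool → (Fin s → F)) //
        (∀ j : Fin d, p.2 j false ≠ p.2 j true) ∧
        ∀ (i : Fin r) (ε : Fin d → Bool), p.1 i (fun j => p.2 j (ε j)) = 1}
      = (q ^ s - 1) ^ d * (q ^ s - q) ^ d * q ^ (r * s ^ d - 2 ^ d * r) := by
  simpa [affineIndependent_bool_iff, Finset.prod_range_succ, hq, mul_pow, mul_comm r,
    Nat.sub_mul (s ^ d)] using count_box_pairs_general (F := F) (V := fun _ : Fin d => Fin s → F)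
      (κ := fun _ => Bool) (c := fun _ : Fin r => (1 : F)) fun h => one_ne_zero (congrFun h ⟨0, hr⟩)
end

section
/- Let F be a finite field with q elements, let s, d, r be positive integers, let V = F^s, and let T_1, ..., T_r : V^d → F be multilinear functions. Define ℰ as the set of tuples (v_1, ..., v_d) ∈ V^d with T_i(v_1, ..., v_d) = 1 for all i; define ℱ as the set of tuples (v_1^0, v_1^1, ..., v_d^0, v_d^1) ∈ V^{2d} with v_j^0 ≠ v_j^1 for all j and T_i(v_1^{ε_1}, ..., v_d^{ε_d}) = 1 for all i = 1, ..., r and all ε_1, ..., ε_d ∈ {0,1}; and define ℬ as the set of (v_1, ..., v_d) ∈ ℰ for which there exists (v'_1, ..., v'_d) ∈ V^d with (v_1, v'_1, ..., v_d, v'_d) ∈ ℱ. Then (q - 1)^d · |ℬ| ≤ |ℱ|. -/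
/-!
In each coordinate separately a multilinear map is affine, so a multilinear map which is constant on
the vertices of a box is constant on the product of the lines through its sides. Hence, if `v` and
`v'` are opposite vertices of a member of `ℱ`, every `v'_j` may be replaced by any point of the line
through `v_j` and `v'_j` other than `v_j`. Choosing one such `v'` for each `v ∈ ℬ` gives `(q - 1)^d`
distinct members of `ℱ` per `v`, and `v` can be read off each of them.
-/

section AffineSpan

variable {R ι : Type*} [Ring R] {V : ι → Type*} [∀ j, AddCommGroup (V j)] [∀ j, Module R (V j)]
  {W : Type*} [AddCommGroup W] [Module R W]

lemma multilinearMap_update_eq_of_mem_affineSpan [DecidableEq ι] (f : MultilinearMap R V W)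
    (u : ∀ j, V j) (a : ι) {s : Set (V a)} {y : W}
    (hs : ∀ x ∈ s, f (Function.update u a x) = y) {x : V a} (hx : x ∈ affineSpan R s) :
    f (Function.update u a x) = y := by
  refine affineSpan_induction hx hs fun c p₁ p₂ p₃ h₁ h₂ h₃ => ?_
  rw [vsub_eq_sub, vadd_eq_add, f.map_update_add, f.map_update_smul, f.map_update_sub, h₁,
    h₂, h₃, sub_self, smul_zero, zero_add]

lemma multilinearMap_eq_of_forall_mem_affineSpan [Finite ι] (f : MultilinearMap R V W)
    {S : ∀ j, Set (V j)} {y : W} (hS : ∀ x, (∀ j, x j ∈ S j) → f x = y) {x : ∀ j, V j}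
    (hx : ∀ j, x j ∈ affineSpan R (S j)) : f x = y := by
  classical
  cases nonempty_fintype ι
  suffices H : ∀ (A : Finset ι) (x : ∀ j, V j), (∀ j ∈ A, x j ∈ affineSpan R (S j)) →
      (∀ j ∉ A, x j ∈ S j) → f x = y from
    H Finset.univ x (fun j _ => hx j) fun j hj => absurd (Finset.mem_univ j) hj
  intro A
  induction A using Finset.induction_on with
  | empty => exact fun x _ hxS => hS x fun j => hxS j (Finset.notMem_empty j)
  | insert a A ha ih =>
    intro x hxA hxS
    rw [← Function.update_eq_self a x]
    refine multilinearMap_update_eq_of_mem_affineSpan f x a (fun z hz => ih _ ?_ ?_)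
      (hxA a (Finset.mem_insert_self a A))
    · intro j hj
      rw [Function.update_of_ne (ne_of_mem_of_not_mem hj ha)]
      exact hxA j (Finset.mem_insert_of_mem hj)
    · intro j hj
      obtain rfl | hja := eq_or_ne j a
      · rwa [Function.update_self]
      · rw [Function.update_of_ne hja]
        exact hxS j (by simp [hja, hj])

end AffineSpan

/-- The ordered box `(v_1, v'_1, …, v_d, v'_d)` with opposite vertices `v` and `v'`: the `j`-th side
is a function on `Bool`, with `v_j` at `false` and `v'_j` at `true`. -/
def orderedBox {ι : Type*} {V : ι → Type*} (v v' : ∀ j, V j) : ∀ j, Bool → V j :=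
  fun j b => if b then v' j else v j

lemma orderedBox_inj {ι : Type*} {V : ι → Type*} {v v' w w' : ∀ j, V j} :
    orderedBox v v' = orderedBox w w' ↔ v = w ∧ v' = w' := by
  simp [orderedBox, funext_iff, forall_and]

section Boxes

variable {R ι κ : Type*} [Ring R] {V : ι → Type*} [∀ j, AddCommGroup (V j)] [∀ j, Module R (V j)]
  {W : κ → Type*} [∀ k, AddCommGroup (W k)] [∀ k, Module R (W k)]

/-- The set `ℱ` of the paper, for a prescribed value `y k` of each map `T k`: ordered boxes with
nondegenerate sides, on all of whose vertices every `T k` takes the value `y k`. -/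
def boxes (T : ∀ k, MultilinearMap R V (W k)) (y : ∀ k, W k) : Set (∀ j, Bool → V j) :=
  {w | (∀ j, w j false ≠ w j true) ∧ ∀ k (ε : ι → Bool), T k (fun j => w j (ε j)) = y k}

/-- The set `ℬ` of the paper, for prescribed values `y`: tuples at which every `T k` takes the value
`y k` and which extend to a member of `boxes T y`. -/
def badEdges (T : ∀ k, MultilinearMap R V (W k)) (y : ∀ k, W k) : Set (∀ j, V j) :=
  {v | (∀ k, T k v = y k) ∧ ∃ v' : ∀ j, V j, orderedBox v v' ∈ boxes T y}

variable {T : ∀ k, MultilinearMap R V (W k)} {y : ∀ k, W k}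

lemma orderedBox_lineMap_mem_boxes [IsDomain R] [∀ j, Module.IsTorsionFree R (V j)] [Finite ι]
    {v v' : ∀ j, V j} (h : orderedBox v v' ∈ boxes T y) {c : ι → R} (hc : ∀ j, c j ≠ 0) :
    orderedBox v (fun j => AffineMap.lineMap (v j) (v' j) (c j)) ∈ boxes T y := by
  obtain ⟨hne, hT⟩ := h
  refine ⟨fun j => ?_, fun k ε => ?_⟩
  · have hvv' : v j ≠ v' j := hne j
    simpa [orderedBox, eq_comm (a := v j), hvv'.symm] using hc j
  · refine multilinearMap_eq_of_forall_mem_affineSpan (T k)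
      (S := fun j => Set.range (orderedBox v v' j)) (fun x hx => ?_) fun j => ?_
    · choose δ hδ using hx
      rw [← funext hδ]
      exact hT k δ
    · have hv : v j ∈ affineSpan R (Set.range (orderedBox v v' j)) :=
        subset_affineSpan R _ ⟨false, rfl⟩
      have hv' : v' j ∈ affineSpan R (Set.range (orderedBox v v' j)) :=
        subset_affineSpan R _ ⟨true, rfl⟩
      cases ε j
      · exact hv
      · exact AffineMap.lineMap_mem _ hv hv'

theorem bad_edges_bound_general [IsDomain R] [∀ j, Module.IsTorsionFree R (V j)] [Fintype ι]
    (T : ∀ k, MultilinearMap R V (W k)) (y : ∀ k, W k) :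
    ({0}ᶜ : Set R).encard ^ Fintype.card ι * (badEdges T y).encard ≤ (boxes T y).encard := by
  have hext : ∀ v ∈ badEdges T y, ∃ v', orderedBox v v' ∈ boxes T y := fun v hv => hv.2
  choose! opp hopp using hext
  let stretch : (ι → R) × (∀ j, V j) → ∀ j, Bool → V j := fun p =>
    orderedBox p.2 fun j => AffineMap.lineMap (p.2 j) (opp p.2 j) (p.1 j)
  let source := Set.univ.pi (fun _ : ι => ({0}ᶜ : Set R)) ×ˢ badEdges T y
  have hmaps : Set.MapsTo stretch source (boxes T y) := fun p hp =>
    orderedBox_lineMap_mem_boxes (hopp p.2 hp.2) fun j => hp.1 j (Set.mem_univ j)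
  have hinj : Set.InjOn stretch source := by
    rintro ⟨c, v⟩ ⟨-, hv⟩ ⟨c', _⟩ - heq
    obtain ⟨rfl, hline⟩ := orderedBox_inj.mp heq
    have hne : ∀ j, v j ≠ opp v j := (hopp v hv).1
    have hc : c = c' := funext fun j => AffineMap.lineMap_injective R (hne j) (congrFun hline j)
    rw [hc]
  calc ({0}ᶜ : Set R).encard ^ Fintype.card ι * (badEdges T y).encard
      = source.encard := by
        rw [Set.encard_prod, Set.encard_pi_eq_prod_encard, Finset.prod_const, Finset.card_univ]
    _ ≤ (boxes T y).encard := Set.encard_le_encard_of_injOn hmaps hinj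

lemma pow_mul_ncard_badEdges_le [IsDomain R] [∀ j, Module.IsTorsionFree R (V j)] [Fintype ι]
    [Finite R] [∀ j, Finite (V j)] (T : ∀ k, MultilinearMap R V (W k)) (y : ∀ k, W k) :
    (Nat.card R - 1) ^ Fintype.card ι * (badEdges T y).ncard ≤ (boxes T y).ncard := by
  have h := bad_edges_bound_general T y
  rw [← (Set.toFinite ({0}ᶜ : Set R)).cast_ncard_eq, ← (Set.toFinite (badEdges T y)).cast_ncard_eq,
    ← (Set.toFinite (boxes T y)).cast_ncard_eq, Set.ncard_compl, Set.ncard_singleton] at h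
  exact_mod_cast h

end Boxes

/-- Lemma 9 (key lemma): with `V = F^s` over a finite field `F` with `q` elements and
multilinear `T_1, …, T_r : V^d → F`, let `ℰ` be the set of tuples on which all `T_i`
equal `1`, `ℱ` the set of ordered boxes, and `ℬ ⊆ ℰ` the set of tuples extendable to a
member of `ℱ`. Then `(q-1)^d ⬝ |ℬ| ≤ |ℱ|`. -/
theorem bad_edges_bound (F : Type*) [Field F] [Fintype F]
    (q s d r : ℕ) (hq : Fintype.card F = q) (hs : 0 < s) (hd : 0 < d) (hr : 0 < r)
    (T : Fin r → MultilinearMap F (fun _ : Fin d => Fin s → F) F)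
    (E : Set (Fin d → (Fin s → F)))
    (hE : E = {v | ∀ i : Fin r, T i v = 1})
    (Fam : Set (Fin d → Bool → (Fin s → F)))
    (hFam : Fam = {w | (∀ j : Fin d, w j false ≠ w j true) ∧
      ∀ (i : Fin r) (ε : Fin d → Bool), T i (fun j => w j (ε j)) = 1})
    (B : Set (Fin d → (Fin s → F)))
    (hB : B = {v ∈ E | ∃ v' : Fin d → (Fin s → F),
      (fun j b => if b then v' j else v j) ∈ Fam}) :
    (q - 1) ^ d * B.ncard ≤ Fam.ncard := by
  subst hq hE
  obtain rfl : Fam = boxes T 1 := hFam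
  obtain rfl : B = badEdges T 1 := hB
  simpa only [Nat.card_eq_fintype_card, Fintype.card_fin] using pow_mul_ncard_badEdges_le T 1
end

section
/- Let F be a field, let d and r be positive integers, let V be an F-vector space, and let T_1, ..., T_r : V^d → F be multilinear functions. Suppose (v_1^0, v_1^1, ..., v_d^0, v_d^1) ∈ V^{2d} satisfies T_i(v_1^{ε_1}, ..., v_d^{ε_d}) = 1 for all i = 1, ..., r and all ε_1, ..., ε_d ∈ {0,1}. Suppose for each j = 1, ..., d that x_j and x'_j are distinct points in the affine hull of v_j^0 and v_j^1, i.e., x_j = α_j v_j^0 + (1-α_j) v_j^1 and x'_j = α'_j v_j^0 + (1-α'_j) v_j^1 with α_j ≠ α'_j (and v_j^0 ≠ v_j^1). Then T_i(x_1^{ε_1}, ..., x_d^{ε_d}) = 1 for all i = 1, ..., r and all ε_1, ..., ε_d ∈ {0,1}, where x_j^0 := x_j and x_j^1 := x'_j. -/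
/-!
A multilinear map is affine in each argument separately, so the values of one argument for which it
lands in a given affine subspace form an affine subspace. Hence the arguments can be moved one at a
time from sets to their affine spans. The box equations are the case where the sets are
`{v j false, v j true}` and the target is a single point.
-/

open Set Function

section MultilinearMap

variable {R ι N : Type*} {M : ι → Type*} [Ring R] [∀ i, AddCommGroup (M i)] [∀ i, Module R (M i)]
  [AddCommGroup N] [Module R N]

theorem multilinearMap_update_mem_of_mem_affineSpan [DecidableEq ι] (f : MultilinearMap R M N)
    (S : AffineSubspace R N) (m : ∀ i, M i) {i : ι} {s : Set (M i)}
    (hs : ∀ x ∈ s, f (update m i x) ∈ S) {x : M i} (hx : x ∈ affineSpan R s) :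
    f (update m i x) ∈ S :=
  have span_le : affineSpan R s ≤ S.comap (f.toLinearMap m i).toAffineMap := affineSpan_le.mpr hs
  span_le hx

theorem multilinearMap_mapsTo_pi_affineSpan [Finite ι] (f : MultilinearMap R M N)
    (S : AffineSubspace R N) {s : ∀ i, Set (M i)} (hs : MapsTo f (univ.pi s) S) :
    MapsTo f (univ.pi fun i ↦ affineSpan R (s i)) S := by
  classical
  have := Fintype.ofFinite ι
  suffices mem_of_mem_affineSpan_on : ∀ (A : Finset ι) (m : ∀ i, M i),
      (∀ i ∈ A, m i ∈ affineSpan R (s i)) → (∀ i ∉ A, m i ∈ s i) → f m ∈ S from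
    fun m hm ↦ mem_of_mem_affineSpan_on Finset.univ m (fun i _ ↦ hm i trivial) (by simp)
  intro A
  induction A using Finset.induction_on with
  | empty => exact fun m _ hm ↦ hs fun i _ ↦ hm i (Finset.notMem_empty i)
  | insert i A hi ih =>
    intro m hspan hmem
    have update_mem : ∀ x ∈ s i, f (update m i x) ∈ S := by
      refine fun x hx ↦ ih _ (fun j hj ↦ ?_) fun j hj ↦ ?_
      · rw [update_of_ne (ne_of_mem_of_not_mem hj hi)]
        exact hspan j (Finset.mem_insert_of_mem hj)
      · obtain rfl | hji := eq_or_ne j i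
        · rwa [update_self]
        · rw [update_of_ne hji]
          exact hmem j (by simp [hji, hj])
    have mem_of_update := multilinearMap_update_mem_of_mem_affineSpan f S m update_mem
      (hspan i (Finset.mem_insert_self i A))
    rwa [update_eq_self] at mem_of_update

theorem box_equations_on_affine_lines_general [Finite ι] {κ : ι → Type*} (f : MultilinearMap R M N)
    {v : ∀ i, κ i → M i} {c : N} (hf : ∀ ε : ∀ i, κ i, f (fun i ↦ v i (ε i)) = c)
    {y : ∀ i, M i} (hy : ∀ i, y i ∈ affineSpan R (range (v i))) : f y = c := by
  have mapsTo_box : MapsTo f (univ.pi fun i ↦ range (v i)) (affineSpan R {c}) := by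
    intro m hm
    choose ε hε using fun i ↦ hm i trivial
    obtain rfl : (fun i ↦ v i (ε i)) = m := funext hε
    exact (AffineSubspace.mem_affineSpan_singleton R N).mpr (hf ε)
  exact (AffineSubspace.mem_affineSpan_singleton R N).mp
    (multilinearMap_mapsTo_pi_affineSpan f _ mapsTo_box fun i _ ↦ hy i)

end MultilinearMap

theorem smul_add_one_sub_smul_mem_affineSubspace {R M : Type*} [Ring R] [AddCommGroup M]
    [Module R M] {S : AffineSubspace R M} {p q : M} (hp : p ∈ S) (hq : q ∈ S) (a : R) :
    a • p + (1 - a) • q ∈ S := by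
  rw [add_comm, ← AffineMap.lineMap_apply_module]
  exact AffineMap.lineMap_mem a hq hp

/-- If all `2^d` box equations `T_i(v_1^{ε_1}, …, v_d^{ε_d}) = 1` hold and, for each `j`,
`x_j` and `x'_j` are distinct points on the affine line through `v_j^0` and `v_j^1`,
then all `2^d` box equations hold with `(x_j, x'_j)` in place of `(v_j^0, v_j^1)`. -/
theorem box_equations_on_affine_lines (F : Type*) [Field F] (d r : ℕ)
    (hd : 0 < d) (hr : 0 < r)
    (V : Type*) [AddCommGroup V] [Module F V]
    (T : Fin r → MultilinearMap F (fun _ : Fin d => V) F)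
    (v : Fin d → Bool → V) (hv : ∀ j, v j false ≠ v j true)
    (hT : ∀ (i : Fin r) (ε : Fin d → Bool), T i (fun j => v j (ε j)) = 1)
    (α α' : Fin d → F) (hαα' : ∀ j, α j ≠ α' j)
    (x x' : Fin d → V)
    (hx : ∀ j, x j = α j • v j false + (1 - α j) • v j true)
    (hx' : ∀ j, x' j = α' j • v j false + (1 - α' j) • v j true) :
    ∀ (i : Fin r) (ε : Fin d → Bool),
      T i (fun j => if ε j then x' j else x j) = 1 :=
  fun i ε ↦ box_equations_on_affine_lines_general (T i) (hT i) fun j ↦ by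
    split_ifs <;>
      simp only [hx, hx', smul_add_one_sub_smul_mem_affineSubspace, mem_affineSpan, mem_range_self]
end
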